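/- Let n ≥ 2 and let P be a polytope realizing the type D_n model. Let f_i denote the number of i-dimensional faces of P for 0 ≤ i ≤ n (so f_n = 1). Then there exist nonnegative integers γ_0, γ_1, …, γ_{⌊n/2⌋} such that ∑_{i=0}^{n} f_i (t−1)^i = ∑_{j=0}^{⌊n/2⌋} γ_j t^j (1+t)^{n−2j} as polynomials in ℤ[t]. (Gal's conjecture holds for generalized associahedra of type D_n.) -/

import Mathlib

open Pointwise

namespace GalD

/-- A polytope in `ℝ^d`: the convex hull of a finite set of points. -/
def IsPolytope {d : ℕ} (P : Set (Fin d → ℝ)) : Prop :=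
  ∃ V : Finset (Fin d → ℝ), P = convexHull ℝ (V : Set (Fin d → ℝ))

/-- A face of `P`: a nonempty exposed face of `P` (`P` itself included). -/
def IsFaceOf {d : ℕ} (F P : Set (Fin d → ℝ)) : Prop :=
  F.Nonempty ∧ IsExposed ℝ P F

/-- The dimension of a set: the rank of the direction of its affine span. -/
noncomputable def polyDim {d : ℕ} (P : Set (Fin d → ℝ)) : ℕ :=
  Module.finrank ℝ (affineSpan ℝ P).direction

/-- A facet: a face of dimension `dim P - 1`. -/
def IsFacetOf {d : ℕ} (F P : Set (Fin d → ℝ)) : Prop :=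
  IsFaceOf F P ∧ polyDim F + 1 = polyDim P

/-- A vertex: a point spanning a face of dimension 0. -/
def IsVertexOf {d : ℕ} (v : Fin d → ℝ) (P : Set (Fin d → ℝ)) : Prop :=
  IsFaceOf {v} P

/-- A simple polytope: every vertex is contained in exactly `dim P` facets. -/
def IsSimplePolytope {d : ℕ} (P : Set (Fin d → ℝ)) : Prop :=
  IsPolytope P ∧ ∀ v, IsVertexOf v P →
    {F : Set (Fin d → ℝ) | IsFacetOf F P ∧ v ∈ F}.ncard = polyDim P

/-- A flag polytope: simple, and every collection of pairwise intersecting facets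
has a nonempty common intersection. -/
def IsFlagPolytope {d : ℕ} (P : Set (Fin d → ℝ)) : Prop :=
  IsSimplePolytope P ∧
  ∀ 𝒮 : Set (Set (Fin d → ℝ)), 𝒮.Nonempty → (∀ F ∈ 𝒮, IsFacetOf F P) →
    (∀ F ∈ 𝒮, ∀ G ∈ 𝒮, (F ∩ G).Nonempty) → (⋂₀ 𝒮).Nonempty

/-- Combinatorial equivalence: an order isomorphism between the face posets. -/
def CombEquiv {d₁ d₂ : ℕ} (P : Set (Fin d₁ → ℝ)) (Q : Set (Fin d₂ → ℝ)) : Prop :=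
  Nonempty ({F : Set (Fin d₁ → ℝ) // IsFaceOf F P} ≃o
            {G : Set (Fin d₂ → ℝ) // IsFaceOf G Q})

/-- The product of a set in `ℝ^{d₁}` and a set in `ℝ^{d₂}`, inside `ℝ^{d₁+d₂}`. -/
def polyProd {d₁ d₂ : ℕ} (Q : Set (Fin d₁ → ℝ)) (R : Set (Fin d₂ → ℝ)) :
    Set (Fin (d₁ + d₂) → ℝ) :=
  {x | (fun i => x (Fin.castAdd d₂ i)) ∈ Q ∧ (fun j => x (Fin.natAdd d₁ j)) ∈ R}

/-- `P` is not combinatorially equivalent to a nontrivial product of two polytopes. -/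
def Indecomposable {d : ℕ} (P : Set (Fin d → ℝ)) : Prop :=
  ¬ ∃ (d₁ d₂ : ℕ) (Q : Set (Fin d₁ → ℝ)) (R : Set (Fin d₂ → ℝ)),
    IsPolytope Q ∧ IsPolytope R ∧ 1 ≤ polyDim Q ∧ 1 ≤ polyDim R ∧
    CombEquiv P (polyProd Q R)

/-- A building set on the ground set `V`. -/
structure IsBuildingSetOn {m : ℕ} (V : Finset (Fin m)) (B : Finset (Finset (Fin m))) :
    Prop where
  subset_ground : ∀ S ∈ B, S ⊆ V
  nonempty_mem : ∀ S ∈ B, S.Nonempty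
  singleton_mem : ∀ i ∈ V, ({i} : Finset (Fin m)) ∈ B
  ground_mem : V ∈ B
  union_mem : ∀ S₁ ∈ B, ∀ S₂ ∈ B, (S₁ ∩ S₂).Nonempty → S₁ ∪ S₂ ∈ B

/-- A connected building set on `[m]`. -/
def IsConnectedBuildingSet (m : ℕ) (B : Finset (Finset (Fin m))) : Prop :=
  IsBuildingSetOn (Finset.univ : Finset (Fin m)) B

/-- The nestohedron `P_B`: the Minkowski sum of the simplices `Δ_S`, `S ∈ B`. -/
noncomputable def nestohedron (m : ℕ) (B : Finset (Finset (Fin m))) :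
    Set (Fin m → ℝ) :=
  ∑ S ∈ B, convexHull ℝ ((fun i => (Pi.single i 1 : Fin m → ℝ)) '' (S : Set (Fin m)))

/-- A diagonal of a convex `N`-gon with vertices labelled by `ZMod N`. -/
def IsDiag (N : ℕ) (e : Finset (ZMod N)) : Prop :=
  ∃ a b : ZMod N, e = {a, b} ∧ b ≠ a ∧ b ≠ a + 1 ∧ b ≠ a - 1

/-- `c` lies strictly between `a` and `b` on the arc from `a` to `b` (counterclockwise). -/
def StrictBtw (N : ℕ) (a c b : ZMod N) : Prop :=
  0 < (c - a).val ∧ (c - a).val < (b - a).val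

/-- Two diagonals cross: their endpoints alternate around the circle. -/
def Crosses (N : ℕ) (e f : Finset (ZMod N)) : Prop :=
  ∃ a b c d : ZMod N, e = {a, b} ∧ f = {c, d} ∧
    StrictBtw N a c b ∧ StrictBtw N b d a

/-- Image of a diagonal under the central symmetry `a ↦ a + n` of the `2n`-gon. -/
def centralSym (n : ℕ) (e : Finset (ZMod (2 * n))) : Finset (ZMod (2 * n)) :=
  e.image (· + (n : ZMod (2 * n)))

/-- A diameter of the `2n`-gon: a diagonal `{a, a + n}`. -/
def IsDiameter (n : ℕ) (e : Finset (ZMod (2 * n))) : Prop :=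
  ∃ a : ZMod (2 * n), e = {a, a + (n : ZMod (2 * n))}

/-- Raw elements of the type `D_n` model: symmetric pairs of diagonals,
red diameters and blue diameters. -/
inductive DElem (n : ℕ) where
  | pair : Finset (Finset (ZMod (2 * n))) → DElem n
  | red  : Finset (ZMod (2 * n)) → DElem n
  | blue : Finset (ZMod (2 * n)) → DElem n

/-- Membership in the set `M_n` of the type `D_n` model. -/
def memM (n : ℕ) : DElem n → Prop
  | .pair s => ∃ e, IsDiag (2 * n) e ∧ ¬ IsDiameter n e ∧ s = {e, centralSym n e}
  | .red e => IsDiag (2 * n) e ∧ IsDiameter n e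
  | .blue e => IsDiag (2 * n) e ∧ IsDiameter n e

/-- Compatibility of elements of the type `D_n` model. -/
def DCompat (n : ℕ) : DElem n → DElem n → Prop
  | .pair s, .pair t => ∀ e ∈ s, ∀ f ∈ t, ¬ Crosses (2 * n) e f
  | .pair s, .red e => ∀ f ∈ s, ¬ Crosses (2 * n) e f
  | .pair s, .blue e => ∀ f ∈ s, ¬ Crosses (2 * n) e f
  | .red e, .pair s => ∀ f ∈ s, ¬ Crosses (2 * n) e f
  | .blue e, .pair s => ∀ f ∈ s, ¬ Crosses (2 * n) e f
  | .red _, .red _ => True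
  | .blue _, .blue _ => True
  | .red e, .blue f => e = f
  | .blue e, .red f => e = f

/-- The set `M_n` of the type `D_n` model, as a type. -/
def MSet (n : ℕ) := {x : DElem n // memM n x}

/-- `P` realizes the type `D_n` model via the bijection `φ`. -/
def RealizesDWith (n : ℕ) {d : ℕ} (P : Set (Fin d → ℝ))
    (φ : MSet n → Set (Fin d → ℝ)) : Prop :=
  IsPolytope P ∧ IsFlagPolytope P ∧ polyDim P = n ∧
  (∀ x, IsFacetOf (φ x) P) ∧ Function.Injective φ ∧
  (∀ F, IsFacetOf F P → ∃ x, φ x = F) ∧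
  ∀ x y : MSet n, x ≠ y → ((φ x ∩ φ y).Nonempty ↔ DCompat n x.1 y.1)

/-- `P` realizes the type `D_n` model. -/
def RealizesD (n : ℕ) {d : ℕ} (P : Set (Fin d → ℝ)) : Prop :=
  ∃ φ, RealizesDWith n P φ

/-- Elements of the type `A_k` model: diagonals of a convex `(k+3)`-gon. -/
def ASet (k : ℕ) := {e : Finset (ZMod (k + 3)) // IsDiag (k + 3) e}

/-- `P` realizes the type `A_k` model via the bijection `φ`. -/
def RealizesAWith (k : ℕ) {d : ℕ} (P : Set (Fin d → ℝ))
    (φ : ASet k → Set (Fin d → ℝ)) : Prop :=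
  IsPolytope P ∧ IsFlagPolytope P ∧ polyDim P = k ∧
  (∀ x, IsFacetOf (φ x) P) ∧ Function.Injective φ ∧
  (∀ F, IsFacetOf F P → ∃ x, φ x = F) ∧
  ∀ x y : ASet k, x ≠ y → ((φ x ∩ φ y).Nonempty ↔ ¬ Crosses (k + 3) x.1 y.1)

/-- `P` realizes the type `A_k` model. -/
def RealizesA (k : ℕ) {d : ℕ} (P : Set (Fin d → ℝ)) : Prop :=
  ∃ φ, RealizesAWith k P φ

/-- A closed halfspace in `ℝ^d`. -/
def IsClosedHalfspace {d : ℕ} (H : Set (Fin d → ℝ)) : Prop :=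
  ∃ (l : (Fin d → ℝ) →ₗ[ℝ] ℝ) (c : ℝ), l ≠ 0 ∧ H = {x | l x ≤ c}

/-- `P'` is obtained from `P` by shaving off a face of codimension 2. -/
def ObtainedByShaving {d : ℕ} (P P' : Set (Fin d → ℝ)) : Prop :=
  ∃ G H : Set (Fin d → ℝ), IsFaceOf G P ∧ polyDim G + 2 = polyDim P ∧
    IsClosedHalfspace H ∧ G ∩ H = ∅ ∧
    (∀ v, IsVertexOf v P → v ∉ G → v ∈ interior H) ∧ P' = P ∩ H

/-- The restriction `B|_S` of a building set. -/
def restrictBS {m : ℕ} (B : Finset (Finset (Fin m))) (S : Finset (Fin m)) :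
    Finset (Finset (Fin m)) :=
  B.filter (· ⊆ S)

/-- The contraction `B / S` of a building set. -/
def contractBS {m : ℕ} (B : Finset (Finset (Fin m))) (S : Finset (Fin m)) :
    Finset (Finset (Fin m)) :=
  (B.filter (fun S'' => ¬ S'' ⊆ S)).image (fun S'' => S'' \ S)

/-- The subset of the nestohedron `P_B` on which `x ↦ ∑_{i ∈ S} x i` is minimized. -/
def minFace (m : ℕ) (B : Finset (Finset (Fin m))) (S : Finset (Fin m)) :
    Set (Fin m → ℝ) :=
  {x ∈ nestohedron m B | ∀ y ∈ nestohedron m B, ∑ i ∈ S, x i ≤ ∑ i ∈ S, y i}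



/-- cliques of a relation inside a finset -/
noncomputable def cliq {V : Type*} (R : V → V → Prop) (s : Finset V) : Finset (Finset V) :=
  open Classical in s.powerset.filter (fun C => ∀ x ∈ C, ∀ y ∈ C, x ≠ y → R x y)

/-- clique polynomial -/
noncomputable def clP {V : Type*} (R : V → V → Prop) (s : Finset V) : Polynomial ℤ :=
  ∑ C ∈ cliq R s, Polynomial.X ^ C.card

/-- link of a vertex -/
noncomputable def lnk {V : Type*} (R : V → V → Prop) (s : Finset V) (v : V) : Finset V :=
  open Classical in s.filter (fun w => w ≠ v ∧ R v w)

lemma mem_cliq {V : Type*} {R : V → V → Prop} {s C : Finset V} :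
    C ∈ cliq R s ↔ C ⊆ s ∧ ∀ x ∈ C, ∀ y ∈ C, x ≠ y → R x y := by
  simp [cliq]

lemma mem_lnk {V : Type*} {R : V → V → Prop} {s : Finset V} {v w : V} :
    w ∈ lnk R s v ↔ w ∈ s ∧ w ≠ v ∧ R v w := by
  simp [lnk]

lemma clP_coeff_zero {V : Type*} (R : V → V → Prop) (s : Finset V) :
    (clP R s).coeff 0 = 1 := by
  classical
  unfold clP
  rw [Polynomial.finsetSum_coeff, Finset.sum_eq_single ∅]
  · simp
  · intro C hC hne
    rw [Polynomial.coeff_X_pow, if_neg]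
    intro h
    exact hne (Finset.card_eq_zero.mp h.symm)
  · intro h
    exact absurd (mem_cliq.mpr (by simp)) h

lemma clP_empty {V : Type*} (R : V → V → Prop) : clP R (∅ : Finset V) = 1 := by
  classical
  unfold clP
  rw [Finset.sum_eq_single ∅]
  · simp
  · intro C hC hne
    exact absurd (Finset.subset_empty.mp (mem_cliq.mp hC).1) hne
  · intro h
    exact absurd (mem_cliq.mpr (by simp)) h

lemma clP_derivative {V : Type*} (R : V → V → Prop) (hR : ∀ x y, R x y → R y x)
    (s : Finset V) :
    Polynomial.derivative (clP R s) = ∑ v ∈ s, clP R (lnk R s v) := by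
  classical
  unfold clP
  rw [Polynomial.derivative_sum]
  have h1 : ∀ C ∈ cliq R s, Polynomial.derivative ((Polynomial.X : Polynomial ℤ) ^ C.card)
      = ∑ v ∈ s, if v ∈ C then (Polynomial.X : Polynomial ℤ) ^ (C.card - 1) else 0 := by
    intro C hC
    rw [Polynomial.derivative_X_pow, ← Finset.sum_filter, Finset.sum_const]
    rw [Finset.filter_mem_eq_inter, Finset.inter_eq_right.mpr (mem_cliq.mp hC).1]
    simp
  rw [Finset.sum_congr rfl h1, Finset.sum_comm]
  refine Finset.sum_congr rfl fun v hv => ?_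
  rw [← Finset.sum_filter]
  refine Finset.sum_bij' (fun C _ => C.erase v) (fun C _ => insert v C) ?_ ?_ ?_ ?_ ?_
  · intro C hC
    rw [Finset.mem_filter, mem_cliq] at hC
    obtain ⟨⟨h1, h2⟩, h3⟩ := hC
    rw [mem_cliq]
    refine ⟨fun w hw => ?_, fun x hx y hy => h2 x (Finset.mem_of_mem_erase hx) y
      (Finset.mem_of_mem_erase hy)⟩
    rw [mem_lnk]
    rw [Finset.mem_erase] at hw
    exact ⟨h1 hw.2, hw.1, h2 v h3 w hw.2 (Ne.symm hw.1)⟩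
  · intro C hC
    rw [mem_cliq] at hC
    obtain ⟨h1, h2⟩ := hC
    rw [Finset.mem_filter, mem_cliq]
    refine ⟨⟨?_, ?_⟩, Finset.mem_insert_self _ _⟩
    · intro w hw
      rcases Finset.mem_insert.mp hw with rfl | hw
      · exact hv
      · exact (mem_lnk.mp (h1 hw)).1
    · intro x hx y hy hxy
      rcases Finset.mem_insert.mp hx with rfl | hx2 <;> rcases Finset.mem_insert.mp hy with rfl | hy2
      · exact absurd rfl hxy
      · exact (mem_lnk.mp (h1 hy2)).2.2
      · exact hR _ _ (mem_lnk.mp (h1 hx2)).2.2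
      · exact h2 x hx2 y hy2 hxy
  · intro C hC
    rw [Finset.mem_filter] at hC
    exact Finset.insert_erase hC.2
  · intro C hC
    refine Finset.erase_insert ?_
    intro h
    exact (mem_lnk.mp ((mem_cliq.mp hC).1 h)).2.1 rfl
  · intro C hC
    rw [Finset.mem_filter] at hC
    rw [Finset.card_erase_of_mem hC.2]

lemma clP_join {V : Type*} [DecidableEq V] (R : V → V → Prop) (hR : ∀ x y, R x y → R y x)
    (s t : Finset V) (hd : Disjoint s t) (hc : ∀ x ∈ s, ∀ y ∈ t, R x y) :
    clP R (s ∪ t) = clP R s * clP R t := by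
  classical
  unfold clP
  rw [Finset.sum_mul_sum, ← Finset.sum_product']
  symm
  refine Finset.sum_bij' (fun p _ => p.1 ∪ p.2) (fun C _ => (C ∩ s, C ∩ t)) ?_ ?_ ?_ ?_ ?_
  · rintro ⟨A, B⟩ h
    simp only [Finset.mem_product, mem_cliq] at h ⊢
    obtain ⟨⟨h1, h2⟩, h3, h4⟩ := h
    refine ⟨Finset.union_subset_union h1 h3, ?_⟩
    intro x hx y hy hxy
    rcases Finset.mem_union.mp hx with hx | hx <;> rcases Finset.mem_union.mp hy with hy | hy
    · exact h2 x hx y hy hxy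
    · exact hc x (h1 hx) y (h3 hy)
    · exact hR _ _ (hc y (h1 hy) x (h3 hx))
    · exact h4 x hx y hy hxy
  · intro C h
    simp only [Finset.mem_product, mem_cliq] at h ⊢
    refine ⟨⟨Finset.inter_subset_right, ?_⟩, Finset.inter_subset_right, ?_⟩
    · intro x hx y hy
      exact h.2 x (Finset.mem_inter.mp hx).1 y (Finset.mem_inter.mp hy).1
    · intro x hx y hy
      exact h.2 x (Finset.mem_inter.mp hx).1 y (Finset.mem_inter.mp hy).1
  · rintro ⟨A, B⟩ h
    simp only [Finset.mem_product, mem_cliq] at h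
    obtain ⟨⟨h1, h2⟩, h3, h4⟩ := h
    have e1 : A ∩ t = ∅ := by
      rw [← Finset.disjoint_iff_inter_eq_empty]
      exact Finset.disjoint_of_subset_left h1 hd
    have e2 : B ∩ s = ∅ := by
      rw [← Finset.disjoint_iff_inter_eq_empty]
      exact Finset.disjoint_of_subset_left h3 hd.symm
    simp only [Finset.union_inter_distrib_right, e1, e2, Finset.inter_eq_left.mpr h1,
      Finset.inter_eq_left.mpr h3, Finset.union_empty, Finset.empty_union]
  · intro C h
    rw [mem_cliq] at h
    rw [← Finset.inter_union_distrib_left]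
    exact Finset.inter_eq_left.mpr h.1
  · rintro ⟨A, B⟩ h
    simp only [Finset.mem_product, mem_cliq] at h
    rw [Finset.card_union_of_disjoint (Finset.disjoint_of_subset_left h.1.1
      (Finset.disjoint_of_subset_right h.2.1 hd)), pow_add]

lemma clP_congr {V W : Type*} (R : V → V → Prop) (R' : W → W → Prop)
    (s : Finset V) (t : Finset W) (f : V → W) (g : W → V)
    (hf : ∀ x ∈ s, f x ∈ t) (hg : ∀ y ∈ t, g y ∈ s)
    (hgf : ∀ x ∈ s, g (f x) = x) (hfg : ∀ y ∈ t, f (g y) = y)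
    (hR : ∀ x ∈ s, ∀ y ∈ s, x ≠ y → (R x y ↔ R' (f x) (f y))) :
    clP R s = clP R' t := by
  classical
  have hR' : ∀ x ∈ t, ∀ y ∈ t, x ≠ y → (R' x y ↔ R (g x) (g y)) := by
    intro x hx y hy hxy
    rw [hR (g x) (hg x hx) (g y) (hg y hy), hfg x hx, hfg y hy]
    intro h
    apply hxy
    rw [← hfg x hx, ← hfg y hy, h]
  unfold clP
  refine Finset.sum_bij' (fun C _ => C.image f) (fun C _ => C.image g) ?_ ?_ ?_ ?_ ?_
  · intro C hC
    rw [mem_cliq] at hC ⊢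
    refine ⟨Finset.image_subset_iff.mpr fun x hx => hf x (hC.1 hx), ?_⟩
    intro x hx y hy hxy
    obtain ⟨x, hx2, rfl⟩ := Finset.mem_image.mp hx
    obtain ⟨y, hy2, rfl⟩ := Finset.mem_image.mp hy
    have : x ≠ y := fun h => hxy (by rw [h])
    exact (hR x (hC.1 hx2) y (hC.1 hy2) this).mp (hC.2 x hx2 y hy2 this)
  · intro C hC
    rw [mem_cliq] at hC ⊢
    refine ⟨Finset.image_subset_iff.mpr fun x hx => hg x (hC.1 hx), ?_⟩
    intro x hx y hy hxy
    obtain ⟨x, hx2, rfl⟩ := Finset.mem_image.mp hx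
    obtain ⟨y, hy2, rfl⟩ := Finset.mem_image.mp hy
    have : x ≠ y := fun h => hxy (by rw [h])
    exact (hR' x (hC.1 hx2) y (hC.1 hy2) this).mp (hC.2 x hx2 y hy2 this)
  · intro C hC
    rw [mem_cliq] at hC
    rw [Finset.image_image]
    conv_rhs => rw [← Finset.image_id (s := C)]
    exact Finset.image_congr fun x hx => hgf x (hC.1 hx)
  · intro C hC
    rw [mem_cliq] at hC
    rw [Finset.image_image]
    conv_rhs => rw [← Finset.image_id (s := C)]
    exact Finset.image_congr fun x hx => hfg x (hC.1 hx)
  · intro C hC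
    rw [mem_cliq] at hC
    rw [Finset.card_image_of_injOn]
    intro x hx y hy hxy
    rw [← hgf x (hC.1 hx), ← hgf y (hC.1 hy)]
    exact congrArg g hxy

lemma poly_ext_deriv (p q : Polynomial ℤ) (h : Polynomial.derivative p = Polynomial.derivative q)
    (h0 : p.coeff 0 = q.coeff 0) : p = q := by
  have h1 : Polynomial.derivative (p - q) = 0 := by rw [Polynomial.derivative_sub, h, sub_self]
  have h2 := Polynomial.eq_C_of_derivative_eq_zero h1
  rw [Polynomial.coeff_sub, h0, sub_self, Polynomial.C_0] at h2
  exact sub_eq_zero.mp h2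



/-- two chords (given by increasing endpoints) cross -/
def cr (a b c d : ℕ) : Prop := (a < c ∧ c < b ∧ b < d) ∨ (c < a ∧ a < d ∧ d < b)

/-- compatibility in the type A model -/
def RA (x y : ℕ × ℕ) : Prop := ¬ cr x.1 x.2 y.1 y.2

lemma RA_symm (x y : ℕ × ℕ) (h : RA x y) : RA y x := by
  unfold RA cr at *; omega

/-- diagonals of the polygon with vertices `0..N` -/
def sA (N : ℕ) : Finset (ℕ × ℕ) :=
  (Finset.range (N + 1) ×ˢ Finset.range (N + 1)).filter
    (fun x => x.1 + 2 ≤ x.2 ∧ ¬ (x.1 = 0 ∧ x.2 = N))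

lemma mem_sA (N a b : ℕ) : (a, b) ∈ sA N ↔ a + 2 ≤ b ∧ b ≤ N ∧ ¬ (a = 0 ∧ b = N) := by
  simp only [sA, Finset.mem_filter, Finset.mem_product, Finset.mem_range]; omega

/-- clique polynomial in type A -/
noncomputable def KA (N : ℕ) : Polynomial ℤ := clP RA (sA N)

lemma KA_two : KA 2 = 1 := by
  have : sA 2 = ∅ := by
    ext ⟨a, b⟩
    rw [mem_sA]
    simp only [Finset.notMem_empty, iff_false]
    omega
  rw [KA, this, clP_empty]

lemma link_A (N p q : ℕ) (h : (p, q) ∈ sA N) :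
    clP RA (lnk RA (sA N) (p, q)) = KA (q - p) * KA (N + 1 - (q - p)) := by
  classical
  rw [mem_sA] at h
  have hs : lnk RA (sA N) (p, q) =
      (lnk RA (sA N) (p, q)).filter (fun x => p ≤ x.1 ∧ x.2 ≤ q) ∪
      (lnk RA (sA N) (p, q)).filter (fun x => ¬ (p ≤ x.1 ∧ x.2 ≤ q)) :=
    (Finset.filter_union_filter_not_eq _ _).symm
  rw [hs, clP_join RA RA_symm]
  · congr 1
    · refine clP_congr RA RA _ _ (fun x => (x.1 - p, x.2 - p)) (fun x => (x.1 + p, x.2 + p))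
        ?_ ?_ ?_ ?_ ?_
      · rintro ⟨a, b⟩ hx
        simp only [Finset.mem_filter, mem_lnk, mem_sA, RA, cr, ne_eq, Prod.mk.injEq] at hx ⊢
        omega
      · rintro ⟨a, b⟩ hx
        simp only [Finset.mem_filter, mem_lnk, mem_sA, RA, cr, ne_eq, Prod.mk.injEq] at hx ⊢
        omega
      · rintro ⟨a, b⟩ hx
        simp only [Finset.mem_filter, mem_lnk, mem_sA, RA, cr, ne_eq, Prod.mk.injEq] at hx ⊢
        omega
      · rintro ⟨a, b⟩ hx
        simp only [mem_sA, Prod.mk.injEq] at hx ⊢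
        omega
      · rintro ⟨a, b⟩ hx ⟨c, d⟩ hy hxy
        simp only [Finset.mem_filter, mem_lnk, mem_sA, RA, cr, ne_eq, Prod.mk.injEq] at *
        omega
    · refine clP_congr RA RA _ _
        (fun x => (if x.1 ≤ p then x.1 else x.1 - (q - p - 1),
                   if x.2 ≤ p then x.2 else x.2 - (q - p - 1)))
        (fun x => (if x.1 ≤ p then x.1 else x.1 + (q - p - 1),
                   if x.2 ≤ p then x.2 else x.2 + (q - p - 1)))
        ?_ ?_ ?_ ?_ ?_
      · rintro ⟨a, b⟩ hx
        simp only [Finset.mem_filter, mem_lnk, mem_sA, RA, cr, ne_eq, Prod.mk.injEq] at hx ⊢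
        split_ifs <;> omega
      · rintro ⟨a, b⟩ hx
        simp only [Finset.mem_filter, mem_lnk, mem_sA, RA, cr, ne_eq, Prod.mk.injEq] at hx ⊢
        split_ifs <;> omega
      · rintro ⟨a, b⟩ hx
        simp only [Finset.mem_filter, mem_lnk, mem_sA, RA, cr, ne_eq, Prod.mk.injEq] at hx ⊢
        split_ifs <;> omega
      · rintro ⟨a, b⟩ hx
        simp only [mem_sA, Prod.mk.injEq] at hx ⊢
        split_ifs <;> omega
      · rintro ⟨a, b⟩ hx ⟨c, d⟩ hy hxy
        simp only [Finset.mem_filter, mem_lnk, mem_sA, RA, cr, ne_eq, Prod.mk.injEq] at *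
        split_ifs <;> omega
  · exact Finset.disjoint_filter_filter_not _ _ _
  · rintro ⟨a, b⟩ hx ⟨c, d⟩ hy
    simp only [Finset.mem_filter, mem_lnk, mem_sA, RA, cr, ne_eq, Prod.mk.injEq] at *
    omega

/-- compatibility in the type D model: `t = 0` arcs, `t = 1` red, `t = 2` blue -/
def RD (n : ℕ) (x y : ℕ × ℕ × ℕ) : Prop :=
  ((x.1 = 0 ∨ y.1 = 0) → (¬ cr x.2.1 x.2.2 y.2.1 y.2.2 ∧
    ¬ cr (x.2.1 + n) (x.2.2 + n) y.2.1 y.2.2 ∧ ¬ cr x.2.1 x.2.2 (y.2.1 + n) (y.2.2 + n))) ∧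
  (x.1 ≠ 0 → y.1 ≠ 0 → (x.1 = y.1 ∨ x.2.1 = y.2.1))

lemma RD_symm (n : ℕ) (x y : ℕ × ℕ × ℕ) (h : RD n x y) : RD n y x := by
  unfold RD cr at *; omega

/-- vertices of the type D model -/
def sD (n : ℕ) : Finset (ℕ × ℕ × ℕ) :=
  (Finset.range 3 ×ˢ Finset.range (2 * n) ×ˢ Finset.range (2 * n)).filter
    (fun x => x.2.1 < n ∧ ((x.1 = 0 ∧ x.2.1 + 2 ≤ x.2.2 ∧ x.2.2 + 1 ≤ x.2.1 + n) ∨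
      (x.1 ≠ 0 ∧ x.2.2 = x.2.1 + n)))

lemma mem_sD (n t a b : ℕ) : (t, a, b) ∈ sD n ↔ t < 3 ∧ a < n ∧
    ((t = 0 ∧ a + 2 ≤ b ∧ b + 1 ≤ a + n) ∨ (t ≠ 0 ∧ b = a + n)) := by
  simp only [sD, Finset.mem_filter, Finset.mem_product, Finset.mem_range]; omega

/-- clique polynomial in type D -/
noncomputable def KD (n : ℕ) : Polynomial ℤ := clP (RD n) (sD n)

/-- rotation by one step -/
def rot (n : ℕ) (x : ℕ × ℕ × ℕ) : ℕ × ℕ × ℕ :=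
  if x.2.1 + 1 < n then (x.1, x.2.1 + 1, x.2.2 + 1) else (x.1, 0, x.2.2 + 1 - n)

/-- inverse rotation by one step -/
def rotI (n : ℕ) (x : ℕ × ℕ × ℕ) : ℕ × ℕ × ℕ :=
  if x.2.1 = 0 then (x.1, n - 1, x.2.2 + n - 1) else (x.1, x.2.1 - 1, x.2.2 - 1)

lemma rot_mem (n : ℕ) (x : ℕ × ℕ × ℕ) (hx : x ∈ sD n) : rot n x ∈ sD n := by
  obtain ⟨t, a, b⟩ := x
  rw [mem_sD] at hx
  unfold rot
  dsimp only
  split_ifs <;> rw [mem_sD] <;> omega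

lemma rotI_mem (n : ℕ) (x : ℕ × ℕ × ℕ) (hx : x ∈ sD n) : rotI n x ∈ sD n := by
  obtain ⟨t, a, b⟩ := x
  rw [mem_sD] at hx
  unfold rotI
  dsimp only
  split_ifs <;> rw [mem_sD] <;> omega

lemma rotI_rot (n : ℕ) (x : ℕ × ℕ × ℕ) (hx : x ∈ sD n) : rotI n (rot n x) = x := by
  obtain ⟨t, a, b⟩ := x
  rw [mem_sD] at hx
  unfold rot
  dsimp only
  split_ifs
  · simp [rotI]
  · simp only [rotI, if_true, Prod.mk.injEq, true_and]; omega

lemma rot_rotI (n : ℕ) (x : ℕ × ℕ × ℕ) (hx : x ∈ sD n) : rot n (rotI n x) = x := by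
  obtain ⟨t, a, b⟩ := x
  rw [mem_sD] at hx
  unfold rotI
  dsimp only
  split_ifs
  · rw [rot, if_neg (by dsimp only; omega)]; simp only [Prod.mk.injEq, true_and]; omega
  · rw [rot, if_pos (by dsimp only; omega)]; simp only [Prod.mk.injEq, true_and]; omega

lemma RD_rot (n : ℕ) (hn : 2 ≤ n) (x y : ℕ × ℕ × ℕ) (hx : x ∈ sD n) (hy : y ∈ sD n) :
    RD n x y ↔ RD n (rot n x) (rot n y) := by
  obtain ⟨t, a, b⟩ := x
  obtain ⟨u, c, d⟩ := y
  rw [mem_sD] at hx hy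
  have hx1 : a < n ∧ a + 2 ≤ b ∧ b ≤ a + n := by omega
  have hy1 : c < n ∧ c + 2 ≤ d ∧ d ≤ c + n := by omega
  clear hx hy
  unfold rot
  dsimp only
  split_ifs with h1 h2 h2
  · have e1 : cr (a + 1) (b + 1) (c + 1) (d + 1) ↔ cr a b c d := by unfold cr; omega
    have e2 : cr (a + 1 + n) (b + 1 + n) (c + 1) (d + 1) ↔ cr (a + n) (b + n) c d := by
      unfold cr; omega
    have e3 : cr (a + 1) (b + 1) (c + 1 + n) (d + 1 + n) ↔ cr a b (c + n) (d + n) := by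
      unfold cr; omega
    simp only [RD, e1, e2, e3, Nat.add_right_cancel_iff]
  · have e1 : cr (a + 1) (b + 1) 0 (d + 1 - n) ↔ cr (a + n) (b + n) c d := by unfold cr; omega
    have e2 : ¬ cr (a + 1 + n) (b + 1 + n) 0 (d + 1 - n) := by
      unfold cr; omega
    have e3 : cr (a + 1) (b + 1) (0 + n) (d + 1 - n + n) ↔ cr a b c d := by
      unfold cr; omega
    have e4 : ¬ cr a b (c + n) (d + n) := by unfold cr; omega
    have e5 : ¬ (a + 1 = 0) := by omega
    have e6 : ¬ (a = c) := by omega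
    simp only [RD, e1, e2, e3, e4, e5, e6]
    tauto
  · have e1 : cr 0 (b + 1 - n) (c + 1) (d + 1) ↔ cr a b (c + n) (d + n) := by unfold cr; omega
    have e2 : cr (0 + n) (b + 1 - n + n) (c + 1) (d + 1) ↔ cr a b c d := by
      unfold cr; omega
    have e3 : ¬ cr 0 (b + 1 - n) (c + 1 + n) (d + 1 + n) := by
      unfold cr; omega
    have e4 : ¬ cr (a + n) (b + n) c d := by unfold cr; omega
    have e5 : ¬ (0 = c + 1) := by omega
    have e6 : ¬ (a = c) := by omega
    simp only [RD, e1, e2, e3, e4, e5, e6]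
    tauto
  · have e1 : cr 0 (b + 1 - n) 0 (d + 1 - n) ↔ cr a b c d := by unfold cr; omega
    have e2 : cr (0 + n) (b + 1 - n + n) 0 (d + 1 - n) ↔ cr (a + n) (b + n) c d := by
      unfold cr; omega
    have e3 : cr 0 (b + 1 - n) (0 + n) (d + 1 - n + n) ↔ cr a b (c + n) (d + n) := by
      unfold cr; omega
    have e5 : a = c := by omega
    simp only [RD, e1, e2, e3, e5]

lemma link_D_rot (n : ℕ) (hn : 2 ≤ n) (x : ℕ × ℕ × ℕ) (h : x ∈ sD n) :
    clP (RD n) (lnk (RD n) (sD n) x) =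
    clP (RD n) (lnk (RD n) (sD n) (rot n x)) := by
  refine clP_congr _ _ _ _ (rot n) (rotI n) ?_ ?_ ?_ ?_ ?_
  · intro y hy
    rw [mem_lnk] at hy ⊢
    refine ⟨rot_mem n y hy.1, ?_, (RD_rot n hn x y h hy.1).mp hy.2.2⟩
    intro e
    apply hy.2.1
    rw [← rotI_rot n y hy.1, e, rotI_rot n x h]
  · intro y hy
    rw [mem_lnk] at hy ⊢
    refine ⟨rotI_mem n y hy.1, ?_, ?_⟩
    · intro e
      apply hy.2.1
      rw [← e, rot_rotI n y hy.1]
    · rw [RD_rot n hn x _ h (rotI_mem n y hy.1), rot_rotI n y hy.1]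
      exact hy.2.2
  · intro y hy
    exact rotI_rot n y (mem_lnk.mp hy).1
  · intro y hy
    exact rot_rotI n y (mem_lnk.mp hy).1
  · intro y hy z hz _
    exact RD_rot n hn y z (mem_lnk.mp hy).1 (mem_lnk.mp hz).1

lemma link_D_rot_all (n t l : ℕ) (hn : 2 ≤ n) (h : (t, 0, l) ∈ sD n) (a : ℕ) (ha : a < n) :
    clP (RD n) (lnk (RD n) (sD n) (t, a, a + l)) =
    clP (RD n) (lnk (RD n) (sD n) (t, 0, l)) := by
  induction a with
  | zero => simp
  | succ a ih =>
    rw [← ih (by omega), link_D_rot n hn (t, a, a + l) (by rw [mem_sD] at h ⊢; omega)]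
    rw [rot, if_pos (by dsimp only; omega)]
    dsimp only
    rw [show a + 1 + l = a + l + 1 by ring]

lemma link_D_diam (n t : ℕ) (hn : 2 ≤ n) (ht : t = 1 ∨ t = 2) :
    clP (RD n) (lnk (RD n) (sD n) (t, 0, n)) = KA (n + 1) := by
  have key : ∀ u c d, (u, c, d) ∈ lnk (RD n) (sD n) (t, 0, n) ↔
      (u = 0 ∧ c + 2 ≤ d ∧ d ≤ n ∧ d + 1 ≤ c + n) ∨ (u = t ∧ 0 < c ∧ c < n ∧ d = c + n) ∨
      (u = 3 - t ∧ c = 0 ∧ d = n) := by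
    intro u c d
    have hu : u = 0 ∨ (u ≠ 0 ∧ u = t) ∨ (u ≠ 0 ∧ u = 3 - t) ∨ ¬ (u < 3) := by omega
    have ht0 : t ≠ 0 := by omega
    simp only [mem_lnk, mem_sD, ne_eq, Prod.mk.injEq]
    rcases hu with hu | ⟨hu, hu'⟩ | ⟨hu, hu'⟩ | hu
    · subst hu
      have : RD n (t, 0, n) (0, c, d) ↔ ¬ cr 0 n c d ∧ ¬ cr (0 + n) (n + n) c d ∧
        ¬ cr 0 n (c + n) (d + n) := by simp [RD]
      rw [this]
      unfold cr
      constructor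
      · intro h; left; omega
      · intro h; refine ⟨by omega, by omega, by omega, by omega, by omega⟩
    · subst hu'
      have : RD n (u, 0, n) (u, c, d) := by simp [RD, hu]
      simp only [this, and_true, true_and]
      omega
    · have : RD n (t, 0, n) (u, c, d) ↔ c = 0 := by
        simp only [RD]
        omega
      rw [this]
      omega
    · omega
  refine clP_congr _ _ _ _
    (fun x => if x.1 = t then (x.2.1, n + 1) else (x.2.1, x.2.2))
    (fun x => if x.2 = n + 1 then (t, x.1, x.1 + n) else
      if x.1 = 0 ∧ x.2 = n then (3 - t, 0, n) else (0, x.1, x.2)) ?_ ?_ ?_ ?_ ?_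
  · rintro ⟨u, c, d⟩ hx
    rw [key] at hx
    dsimp only
    split_ifs <;> rw [mem_sA] <;> omega
  · rintro ⟨c, d⟩ hx
    rw [mem_sA] at hx
    dsimp only
    split_ifs <;> rw [key] <;> omega
  · rintro ⟨u, c, d⟩ hx
    rw [key] at hx
    dsimp only
    by_cases h : u = t
    · simp only [h, if_true, Prod.mk.injEq, true_and]; omega
    · rw [if_neg h]
      dsimp only
      rw [if_neg (by omega)]
      split_ifs <;> simp only [Prod.mk.injEq, and_true] <;> omega
  · rintro ⟨c, d⟩ hx
    rw [mem_sA] at hx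
    dsimp only
    by_cases h : d = n + 1
    · simp [h]
    · rw [if_neg h]
      by_cases h2 : c = 0 ∧ d = n
      · rw [if_pos h2]; dsimp only; rw [if_neg (by omega), h2.1, h2.2]
      · rw [if_neg h2]; dsimp only; rw [if_neg (by omega)]
  · rintro ⟨u, c, d⟩ hx ⟨v, e, f⟩ hy hxy
    rw [key] at hx hy
    dsimp only
    have hxy' : ¬ (u = v ∧ c = e ∧ d = f) := by simpa using hxy
    rcases hx with hx | hx | hx <;> rcases hy with hy | hy | hy
    · rw [if_neg (by omega), if_neg (by omega)]; simp only [RD, RA, cr]; omega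
    · rw [if_neg (by omega), if_pos (by omega)]; simp only [RD, RA, cr]; omega
    · rw [if_neg (by omega), if_neg (by omega)]; simp only [RD, RA, cr]; omega
    · rw [if_pos (by omega), if_neg (by omega)]; simp only [RD, RA, cr]; omega
    · rw [if_pos (by omega), if_pos (by omega)]; simp only [RD, RA, cr]; omega
    · rw [if_pos (by omega), if_neg (by omega)]; simp only [RD, RA, cr]; omega
    · rw [if_neg (by omega), if_neg (by omega)]; simp only [RD, RA, cr]; omega
    · rw [if_neg (by omega), if_pos (by omega)]; simp only [RD, RA, cr]; omega
    · omega



lemma link_D_key (n p : ℕ) (hp : 1 ≤ p) (hpn : p + 2 ≤ n) (u c d : ℕ) :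
    (u, c, d) ∈ lnk (RD n) (sD n) (0, p, n) ↔
      (u = 0 ∧ c + 2 ≤ d ∧ p ≤ c ∧ d ≤ n ∧ ¬ (c = p ∧ d = n)) ∨
      (u < 3 ∧ c ≤ p ∧ (d ≤ p ∨ n ≤ d) ∧
        ((u = 0 ∧ c + 2 ≤ d ∧ d + 1 ≤ c + n ∧ ¬ (c = p ∧ d = n)) ∨ (u ≠ 0 ∧ d = c + n))) := by
  have : RD n (0, p, n) (u, c, d) ↔ ¬ cr p n c d ∧ ¬ cr (p + n) (n + n) c d ∧
        ¬ cr p n (c + n) (d + n) := by simp [RD]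
  simp only [mem_lnk, mem_sD, ne_eq, Prod.mk.injEq]
  rw [this]
  unfold cr
  by_cases hu : u = 0
  · simp only [hu, true_and, not_true_eq_false, false_and, or_false]
    constructor
    · rintro ⟨h1, h2, h3, h4, h5⟩
      omega
    · intro h
      refine ⟨by omega, by omega, by omega, by omega, by omega⟩
  · simp only [hu, false_and, false_or, not_false_eq_true, true_and]
    constructor
    · rintro ⟨h1, h3, h4, h5⟩
      omega
    · intro h
      refine ⟨by omega, by omega, by omega, by omega⟩

lemma link_D_arc (n p : ℕ) (hp : 1 ≤ p) (hpn : p + 2 ≤ n) :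
    clP (RD n) (lnk (RD n) (sD n) (0, p, n)) = KA (n - p) * KD (p + 1) := by
  classical
  have key := link_D_key n p hp hpn
  have hs : lnk (RD n) (sD n) (0, p, n) =
      (lnk (RD n) (sD n) (0, p, n)).filter (fun x => x.1 = 0 ∧ p ≤ x.2.1 ∧ x.2.2 ≤ n) ∪
      (lnk (RD n) (sD n) (0, p, n)).filter (fun x => ¬ (x.1 = 0 ∧ p ≤ x.2.1 ∧ x.2.2 ≤ n)) :=
    (Finset.filter_union_filter_not_eq _ _).symm
  rw [hs, clP_join (RD n) (RD_symm n)]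
  · congr 1
    · refine clP_congr _ _ _ _ (fun x => (x.2.1 - p, x.2.2 - p)) (fun x => (0, x.1 + p, x.2 + p))
        ?_ ?_ ?_ ?_ ?_
      · rintro ⟨u, c, d⟩ hx
        simp only [Finset.mem_filter, key, mem_sA] at hx ⊢
        omega
      · rintro ⟨a, b⟩ hx
        rw [mem_sA] at hx
        rw [Finset.mem_filter, key]
        exact ⟨Or.inl ⟨rfl, by omega, by omega, by omega, by omega⟩, rfl, Nat.le_add_left _ _,
          show b + p ≤ n by omega⟩
      · rintro ⟨u, c, d⟩ hx
        simp only [Finset.mem_filter, key, Prod.mk.injEq] at hx ⊢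
        omega
      · rintro ⟨a, b⟩ hx
        simp only [Prod.mk.injEq]
        omega
      · rintro ⟨u, c, d⟩ hx ⟨v, e, f⟩ hy hxy
        simp only [Finset.mem_filter, key] at hx hy
        have hx' : u = 0 ∧ c + 2 ≤ d ∧ p ≤ c ∧ d ≤ n := by omega
        have hy' : v = 0 ∧ e + 2 ≤ f ∧ p ≤ e ∧ f ≤ n := by omega
        clear hx hy
        have : RD n (u, c, d) (v, e, f) ↔ ¬ cr c d e f ∧ ¬ cr (c + n) (d + n) e f ∧
          ¬ cr c d (e + n) (f + n) := by simp [RD, hx'.1, hy'.1]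
        rw [this]
        simp only [RA, cr]
        omega
    · refine clP_congr _ _ _ _
        (fun x => (x.1, x.2.1, if x.2.2 ≤ p then x.2.2 else x.2.2 - (n - p - 1)))
        (fun x => (x.1, x.2.1, if x.2.2 ≤ p then x.2.2 else x.2.2 + (n - p - 1)))
        ?_ ?_ ?_ ?_ ?_
      · rintro ⟨u, c, d⟩ hx
        simp only [Finset.mem_filter, key] at hx
        dsimp only
        split_ifs <;> rw [mem_sD] <;> omega
      · rintro ⟨u, a, b⟩ hx
        rw [mem_sD] at hx
        dsimp only
        split_ifs <;> simp only [Finset.mem_filter, key] <;> omega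
      · rintro ⟨u, c, d⟩ hx
        simp only [Finset.mem_filter, key] at hx
        simp only [Prod.mk.injEq, true_and]
        split_ifs <;> omega
      · rintro ⟨u, a, b⟩ hx
        rw [mem_sD] at hx
        simp only [Prod.mk.injEq, true_and]
        split_ifs <;> omega
      · rintro ⟨u, c, d⟩ hx ⟨v, e, f⟩ hy hxy
        simp only [Finset.mem_filter, key] at hx hy
        have hx' : c < d ∧ c ≤ p ∧ (d ≤ p ∨ n ≤ d) ∧ d ≤ c + n := by omega
        have hy' : e < f ∧ e ≤ p ∧ (f ≤ p ∨ n ≤ f) ∧ f ≤ e + n := by omega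
        clear hx hy hxy
        dsimp only
        simp only [RD]
        set d' := if d ≤ p then d else d - (n - p - 1) with hd
        set f' := if f ≤ p then f else f - (n - p - 1) with hf
        have hd' : (d ≤ p ∧ d' = d) ∨ (n ≤ d ∧ d' + n = d + p + 1) := by
          rw [hd]; split_ifs <;> omega
        have hf' : (f ≤ p ∧ f' = f) ∨ (n ≤ f ∧ f' + n = f + p + 1) := by
          rw [hf]; split_ifs <;> omega
        clear_value d' f'
        clear hd hf
        have e1 : cr c d' e f' ↔ cr c d e f := by unfold cr; omega
        have e2 : cr (c + (p + 1)) (d' + (p + 1)) e f' ↔ cr (c + n) (d + n) e f := by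
          unfold cr; omega
        have e3 : cr c d' (e + (p + 1)) (f' + (p + 1)) ↔ cr c d (e + n) (f + n) := by
          unfold cr; omega
        rw [e1, e2, e3]
  · exact Finset.disjoint_filter_filter_not _ _ _
  · rintro ⟨u, c, d⟩ hx ⟨v, e, f⟩ hy
    simp only [Finset.mem_filter, key] at hx hy
    have hx' : u = 0 ∧ c + 2 ≤ d ∧ p ≤ c ∧ d ≤ n := by omega
    have hy' : e ≤ p ∧ (f ≤ p ∨ n ≤ f) ∧ f ≤ e + n ∧ e < f:= by omega
    clear hx hy
    have : RD n (u, c, d) (v, e, f) ↔ ¬ cr c d e f ∧ ¬ cr (c + n) (d + n) e f ∧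
          ¬ cr c d (e + n) (f + n) := by simp [RD, hx'.1]
    rw [this]
    unfold cr
    refine ⟨by omega, by omega, by omega⟩



lemma KA_deriv (m : ℕ) : Polynomial.derivative (KA (m + 2)) =
    ∑ i ∈ Finset.range m, ((m + 1 - i : ℕ) : Polynomial ℤ) * (KA (i + 2) * KA (m - 1 - i + 2)) := by
  unfold KA
  rw [clP_derivative RA RA_symm]
  have h1 : ∀ i ∈ Finset.range m, ((m + 1 - i : ℕ) : Polynomial ℤ) *
      (clP RA (sA (i + 2)) * clP RA (sA (m - 1 - i + 2))) =
      ∑ a ∈ Finset.range (m + 1 - i), clP RA (sA (i + 2)) * clP RA (sA (m - 1 - i + 2)) := by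
    intro i _
    simp
  rw [Finset.sum_congr rfl h1, Finset.sum_sigma']
  refine Finset.sum_bij' (fun x _ => (⟨x.2 - x.1 - 2, x.1⟩ : (_ : ℕ) × ℕ))
    (fun y _ => (y.2, y.2 + y.1 + 2)) ?_ ?_ ?_ ?_ ?_
  · rintro ⟨a, b⟩ h
    rw [mem_sA] at h
    simp only [Finset.mem_sigma, Finset.mem_range]
    omega
  · rintro ⟨i, a⟩ h
    simp only [Finset.mem_sigma, Finset.mem_range] at h
    rw [mem_sA]
    dsimp only
    omega
  · rintro ⟨a, b⟩ h
    rw [mem_sA] at h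
    simp only [Prod.mk.injEq, true_and]
    omega
  · rintro ⟨i, a⟩ h
    simp only [Sigma.mk.injEq, heq_eq_eq, and_true]
    omega
  · rintro ⟨a, b⟩ h
    rw [link_A (m + 2) a b h]
    rw [mem_sA] at h
    dsimp only
    unfold KA
    rw [show b - a - 2 + 2 = b - a by omega,
      show m - 1 - (b - a - 2) + 2 = m + 2 + 1 - (b - a) by omega]

lemma link_D_all (n t a b : ℕ) (hn : 2 ≤ n) (h : (t, a, b) ∈ sD n) :
    clP (RD n) (lnk (RD n) (sD n) (t, a, b)) =
      if t = 0 then KA (b - a) * KD (n + 1 - (b - a)) else KA (n + 1) := by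
  have hh := h
  rw [mem_sD] at h
  have hb : b = a + (b - a) := by omega
  split_ifs with ht
  · subst ht
    rw [hb, link_D_rot_all n 0 (b - a) hn (by rw [mem_sD]; omega) a (by omega)]
    rw [← link_D_rot_all n 0 (b - a) hn (by rw [mem_sD]; omega) (n - (b - a)) (by omega)]
    rw [show n - (b - a) + (b - a) = n by omega, link_D_arc n _ (by omega) (by omega)]
    congr 2
    · omega
    · omega
  · rw [hb, link_D_rot_all n t (b - a) hn (by rw [mem_sD]; omega) a (by omega)]
    rw [show b - a = n by omega]
    exact link_D_diam n t hn (by omega)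

lemma KD_deriv (n : ℕ) (hn : 2 ≤ n) : Polynomial.derivative (KD n) =
    2 * (n : Polynomial ℤ) * KA (n + 1) +
    (n : Polynomial ℤ) * ∑ i ∈ Finset.range (n - 2), KA (i + 2) * KD (n - 1 - i) := by
  conv_lhs => rw [KD, clP_derivative (RD n) (RD_symm n)]
  rw [← Finset.sum_filter_add_sum_filter_not (sD n) (fun x => x.1 = 0), add_comm]
  congr 1
  · have : 2 * (n : Polynomial ℤ) * KA (n + 1) =
        ∑ t ∈ Finset.range 2 ×ˢ Finset.range n, KA (n + 1) := by
      rw [Finset.sum_const, Finset.card_product, Finset.card_range, Finset.card_range,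
        nsmul_eq_mul]
      push_cast
      ring
    rw [this]
    refine Finset.sum_bij' (fun x _ => (x.1 - 1, x.2.1))
      (fun y _ => (y.1 + 1, y.2, y.2 + n)) ?_ ?_ ?_ ?_ ?_
    · rintro ⟨t, a, b⟩ h
      rw [Finset.mem_filter, mem_sD] at h
      simp only [Finset.mem_product, Finset.mem_range]
      dsimp only at h
      omega
    · rintro ⟨t, a⟩ h
      simp only [Finset.mem_product, Finset.mem_range] at h
      rw [Finset.mem_filter, mem_sD]
      dsimp only
      omega
    · rintro ⟨t, a, b⟩ h
      rw [Finset.mem_filter, mem_sD] at h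
      simp only [Prod.mk.injEq, true_and]
      dsimp only at h
      omega
    · rintro ⟨t, a⟩ h
      simp
    · rintro ⟨t, a, b⟩ h
      rw [Finset.mem_filter] at h
      rw [link_D_all n t a b hn h.1, if_neg h.2]
  · rw [Finset.mul_sum]
    have h1 : ∀ i ∈ Finset.range (n - 2), (n : Polynomial ℤ) * (KA (i + 2) * KD (n - 1 - i)) =
      ∑ a ∈ Finset.range n, KA (i + 2) * KD (n - 1 - i) := by
      intro i _
      simp
    rw [Finset.sum_congr rfl h1, Finset.sum_sigma']
    refine Finset.sum_bij' (fun x _ => (⟨x.2.2 - x.2.1 - 2, x.2.1⟩ : (_ : ℕ) × ℕ))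
      (fun y _ => (0, y.2, y.2 + y.1 + 2)) ?_ ?_ ?_ ?_ ?_
    · rintro ⟨t, a, b⟩ h
      rw [Finset.mem_filter, mem_sD] at h
      simp only [Finset.mem_sigma, Finset.mem_range]
      dsimp only at h
      omega
    · rintro ⟨i, a⟩ h
      simp only [Finset.mem_sigma, Finset.mem_range] at h
      rw [Finset.mem_filter, mem_sD]
      dsimp only
      omega
    · rintro ⟨t, a, b⟩ h
      rw [Finset.mem_filter, mem_sD] at h
      simp only [Prod.mk.injEq, true_and]
      dsimp only at h
      omega
    · rintro ⟨i, a⟩ h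
      simp only [Sigma.mk.injEq, heq_eq_eq, and_true]
      omega
    · rintro ⟨t, a, b⟩ h
      rw [Finset.mem_filter] at h
      rw [link_D_all n t a b hn h.1, if_pos h.2]
      rw [mem_sD] at h
      dsimp only at h ⊢
      rw [show b - a - 2 + 2 = b - a by omega,
        show n - 1 - (b - a - 2) = n + 1 - (b - a) by omega]



/-- the polynomial `s (1 + s)` -/
noncomputable def pU : Polynomial ℤ := Polynomial.X * (1 + Polynomial.X)
/-- the polynomial `1 + 2 s` -/
noncomputable def pW : Polynomial ℤ := 1 + 2 * Polynomial.X

lemma pU_deriv : Polynomial.derivative pU = pW := by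
  simp only [pU, pW, Polynomial.derivative_mul, Polynomial.derivative_add,
    Polynomial.derivative_X, Polynomial.derivative_one]
  ring

lemma pW_deriv : Polynomial.derivative pW = 2 := by
  have : (2 : Polynomial ℤ) = Polynomial.C 2 := rfl
  simp only [pW, Polynomial.derivative_mul, Polynomial.derivative_add,
    Polynomial.derivative_X, Polynomial.derivative_one]
  rw [this, Polynomial.derivative_C]
  simp

/-- gamma-expansion with coefficients `α j * choose m (2 j)` -/
noncomputable def Sc (α : ℕ → ℕ) (m : ℕ) : Polynomial ℤ :=
  ∑ j ∈ Finset.range (m + 1), ((α j * m.choose (2 * j) : ℕ) : Polynomial ℤ) * pU ^ j *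
    pW ^ (m - 2 * j)

lemma Sc_eq (α : ℕ → ℕ) (m M : ℕ) (h : m < M) : Sc α m =
    ∑ j ∈ Finset.range M, ((α j * m.choose (2 * j) : ℕ) : Polynomial ℤ) * pU ^ j *
    pW ^ (m - 2 * j) := by
  unfold Sc
  refine Finset.sum_subset ?_ ?_
  · intro x hx
    rw [Finset.mem_range] at *
    omega
  · intro x _ hx
    rw [Finset.mem_range] at hx
    rw [Nat.choose_eq_zero_of_lt (by omega)]
    simp

lemma Sc_coeff_zero (α : ℕ → ℕ) (m : ℕ) : (Sc α m).coeff 0 = α 0 := by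
  rw [Polynomial.coeff_zero_eq_eval_zero]
  unfold Sc
  rw [Polynomial.eval_finsetSum, Finset.sum_eq_single 0]
  · simp [pW]
  · intro b _ hb
    simp [pU, hb]
  · simp

lemma Sc_deriv (α : ℕ → ℕ) (m : ℕ) : Polynomial.derivative (Sc α (m + 1)) =
    ∑ j ∈ Finset.range (m + 1),
      (((j + 1) * α (j + 1) * (m + 1).choose (2 * j + 2)
        + 2 * (2 * j + 1) * α j * (m + 1).choose (2 * j + 1) : ℕ) : Polynomial ℤ)
        * pU ^ j * pW ^ (m - 2 * j) := by
  unfold Sc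
  rw [Polynomial.derivative_sum]
  have h1 : ∀ j ∈ Finset.range (m + 1 + 1), Polynomial.derivative
      (((α j * (m + 1).choose (2 * j) : ℕ) : Polynomial ℤ) * pU ^ j * pW ^ (m + 1 - 2 * j)) =
      ((α j * (m + 1).choose (2 * j) * j : ℕ) : Polynomial ℤ) * pU ^ (j - 1) *
        pW ^ (m + 1 - 2 * j + 1) +
      ((2 * (2 * j + 1) * α j * (m + 1).choose (2 * j + 1) : ℕ) : Polynomial ℤ)
        * pU ^ j * pW ^ (m - 2 * j) := by
    intro j _
    rw [Polynomial.derivative_mul, Polynomial.derivative_mul, Polynomial.derivative_natCast,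
      Polynomial.derivative_pow, Polynomial.derivative_pow, pU_deriv, pW_deriv]
    have e : (m + 1).choose (2 * j + 1) * (2 * j + 1) = (m + 1).choose (2 * j) * (m + 1 - 2 * j) :=
      Nat.choose_succ_right_eq _ _
    have e' : ((2 * (2 * j + 1) * α j * (m + 1).choose (2 * j + 1) : ℕ) : Polynomial ℤ) =
        ((2 * α j * ((m + 1).choose (2 * j) * (m + 1 - 2 * j)) : ℕ) : Polynomial ℤ) := by
      rw [← e]; congr 1; ring
    rw [e', show m + 1 - 2 * j - 1 = m - 2 * j by omega]
    simp only [Polynomial.C_eq_natCast, Nat.cast_mul]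
    push_cast
    ring
  rw [Finset.sum_congr rfl h1, Finset.sum_add_distrib]
  rw [Finset.sum_range_succ' (fun j => ((α j * (m + 1).choose (2 * j) * j : ℕ) : Polynomial ℤ)
    * pU ^ (j - 1) * pW ^ (m + 1 - 2 * j + 1))]
  rw [Finset.sum_range_succ (fun j =>
      ((2 * (2 * j + 1) * α j * (m + 1).choose (2 * j + 1) : ℕ) : Polynomial ℤ)
        * pU ^ j * pW ^ (m - 2 * j))]
  rw [Nat.choose_eq_zero_of_lt (show m + 1 < 2 * (m + 1) + 1 by omega)]
  simp only [mul_zero, Nat.cast_zero, zero_mul, add_zero]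
  rw [← Finset.sum_add_distrib]
  refine Finset.sum_congr rfl fun j _ => ?_
  by_cases hj : 2 * j + 2 ≤ m + 1
  · rw [show m + 1 - 2 * (j + 1) + 1 = m - 2 * j by omega, show 2 * (j + 1) = 2 * j + 2 by ring,
      Nat.add_sub_cancel]
    push_cast
    ring
  · rw [Nat.choose_eq_zero_of_lt (show m + 1 < 2 * (j + 1) by omega),
      Nat.choose_eq_zero_of_lt (show m + 1 < 2 * j + 2 by omega)]
    simp

lemma sum_choose_conv (m p q : ℕ) :
    ∑ i ∈ Finset.range (m + 1), i.choose p * (m - i).choose q = (m + 1).choose (p + q + 1) := by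
  induction m generalizing q with
  | zero =>
    rcases p with _ | p <;> rcases q with _ | q <;> simp
    all_goals (rw [Nat.choose_eq_zero_of_lt]; omega)
  | succ m ih =>
    rw [Finset.sum_range_succ]
    rcases q with _ | q
    · have := ih 0
      simp only [Nat.choose_zero_right, mul_one] at this ⊢
      rw [this, add_zero, Nat.choose_succ_succ' (m + 1) p, add_comm]
    · have h1 : ∀ i ∈ Finset.range (m + 1), i.choose p * (m + 1 - i).choose (q + 1) =
          i.choose p * (m - i).choose q + i.choose p * (m - i).choose (q + 1) := by
        intro i hi
        rw [Finset.mem_range] at hi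
        rw [show m + 1 - i = m - i + 1 by omega, Nat.choose_succ_succ', mul_add]
      rw [Finset.sum_congr rfl h1, Finset.sum_add_distrib, ih q, ih (q + 1)]
      simp only [Nat.sub_self, Nat.choose_zero_succ, mul_zero, add_zero]
      rw [show p + (q + 1) + 1 = (p + q + 1) + 1 by ring, Nat.choose_succ_succ' (m + 1) (p + q + 1)]

lemma Sc_conv (α β : ℕ → ℕ) (m : ℕ) :
    ∑ i ∈ Finset.range (m + 1), Sc α i * Sc β (m - i) =
    ∑ j ∈ Finset.range (m + 1),
      (((∑ p ∈ Finset.HasAntidiagonal.antidiagonal j, α p.1 * β p.2) * (m + 1).choose (2 * j + 1) : ℕ)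
        : Polynomial ℤ) * pU ^ j * pW ^ (m - 2 * j) := by
  set T : ℕ × ℕ → Polynomial ℤ := fun x =>
    ((α x.1 * β x.2 * (m + 1).choose (2 * (x.1 + x.2) + 1) : ℕ) : Polynomial ℤ) *
      pU ^ (x.1 + x.2) * pW ^ (m - 2 * (x.1 + x.2)) with hT
  have hL : ∑ i ∈ Finset.range (m + 1), Sc α i * Sc β (m - i) =
      ∑ x ∈ Finset.range (m + 1) ×ˢ Finset.range (m + 1), T x := by
    have h1 : ∀ i ∈ Finset.range (m + 1), Sc α i * Sc β (m - i) =
        ∑ x ∈ Finset.range (m + 1) ×ˢ Finset.range (m + 1),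
          ((α x.1 * β x.2 * (i.choose (2 * x.1) * (m - i).choose (2 * x.2)) : ℕ) : Polynomial ℤ) *
          pU ^ (x.1 + x.2) * pW ^ (m - 2 * (x.1 + x.2)) := by
      intro i hi
      rw [Finset.mem_range] at hi
      rw [Sc_eq α i (m + 1) hi, Sc_eq β (m - i) (m + 1) (by omega), Finset.sum_mul_sum,
        ← Finset.sum_product']
      refine Finset.sum_congr rfl fun x _ => ?_
      by_cases ha : i < 2 * x.1
      · rw [Nat.choose_eq_zero_of_lt ha]; simp
      · by_cases hb : m - i < 2 * x.2
        · rw [Nat.choose_eq_zero_of_lt hb]; simp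
        · rw [show m - 2 * (x.1 + x.2) = (i - 2 * x.1) + (m - i - 2 * x.2) by omega]
          push_cast
          ring
    rw [Finset.sum_congr rfl h1, Finset.sum_comm]
    refine Finset.sum_congr rfl fun x _ => ?_
    rw [← Finset.sum_mul, ← Finset.sum_mul, ← Nat.cast_sum, ← Finset.mul_sum, sum_choose_conv, hT]
    dsimp only
    rw [mul_add]
  have hR : ∀ j ∈ Finset.range (m + 1),
      (((∑ p ∈ Finset.HasAntidiagonal.antidiagonal j, α p.1 * β p.2) * (m + 1).choose (2 * j + 1) : ℕ)
        : Polynomial ℤ) * pU ^ j * pW ^ (m - 2 * j) =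
      ∑ x ∈ Finset.range (m + 1) ×ˢ Finset.range (m + 1), if x.1 + x.2 = j then T x else 0 := by
    intro j hj
    rw [Finset.mem_range] at hj
    rw [← Finset.sum_filter]
    have : (Finset.range (m + 1) ×ˢ Finset.range (m + 1)).filter (fun x => x.1 + x.2 = j) =
        Finset.HasAntidiagonal.antidiagonal j := by
      ext ⟨a, b⟩
      simp only [Finset.mem_filter, Finset.mem_product, Finset.mem_range, Finset.HasAntidiagonal.mem_antidiagonal]
      omega
    rw [this, Finset.sum_mul, Nat.cast_sum, Finset.sum_mul, Finset.sum_mul]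
    refine Finset.sum_congr rfl fun x hx => ?_
    rw [Finset.HasAntidiagonal.mem_antidiagonal] at hx
    rw [hT]
    dsimp only
    rw [hx]
  rw [hL, Finset.sum_congr rfl hR, Finset.sum_comm]
  refine Finset.sum_congr rfl fun x _ => ?_
  rw [Finset.sum_ite_eq]
  split_ifs with h
  · rfl
  · rw [Finset.mem_range] at h
    rw [hT]
    dsimp only
    rw [Nat.choose_eq_zero_of_lt (by omega)]
    simp

/-- type A -/
noncomputable abbrev gA (m : ℕ) : Polynomial ℤ := Sc catalan m
/-- type B -/
noncomputable abbrev gB (m : ℕ) : Polynomial ℤ := Sc Nat.centralBinom m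

lemma cat_rec (j : ℕ) : (j + 2) * catalan (j + 1) = 2 * (2 * j + 1) * catalan j := by
  have h1 := succ_mul_catalan_eq_centralBinom (j + 1)
  have h2 := succ_mul_catalan_eq_centralBinom j
  have h3 := Nat.succ_mul_centralBinom_succ j
  rw [← h1, ← h2] at h3
  have h4 : (j + 1) * ((j + 2) * catalan (j + 1)) = (j + 1) * (2 * (2 * j + 1) * catalan j) := by
    linarith
  exact Nat.eq_of_mul_eq_mul_left (by omega) h4

lemma cat_conv (j : ℕ) : ∑ p ∈ Finset.HasAntidiagonal.antidiagonal j, catalan p.1 * Nat.centralBinom p.2 =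
    (2 * j + 1) * catalan j := by
  have h1 : ∑ p ∈ Finset.HasAntidiagonal.antidiagonal j, catalan p.1 * Nat.centralBinom p.2 =
      ∑ p ∈ Finset.HasAntidiagonal.antidiagonal j, (p.2 + 1) * (catalan p.1 * catalan p.2) := by
    refine Finset.sum_congr rfl fun p _ => ?_
    rw [← succ_mul_catalan_eq_centralBinom]; ring
  have h2 : ∑ p ∈ Finset.HasAntidiagonal.antidiagonal j, (p.2 + 1) * (catalan p.1 * catalan p.2) =
      ∑ p ∈ Finset.HasAntidiagonal.antidiagonal j, (p.1 + 1) * (catalan p.1 * catalan p.2) := by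
    rw [← Finset.Nat.sum_antidiagonal_swap]
    refine Finset.sum_congr rfl fun p _ => ?_
    simp only [Prod.fst_swap, Prod.snd_swap]
    ring
  have h3 : ∑ p ∈ Finset.HasAntidiagonal.antidiagonal j, (p.2 + 1) * (catalan p.1 * catalan p.2) +
      ∑ p ∈ Finset.HasAntidiagonal.antidiagonal j, (p.1 + 1) * (catalan p.1 * catalan p.2) =
      (j + 2) * catalan (j + 1) := by
    rw [← Finset.sum_add_distrib, catalan_succ', Finset.mul_sum]
    refine Finset.sum_congr rfl fun p hp => ?_
    rw [Finset.HasAntidiagonal.mem_antidiagonal] at hp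
    rw [← hp]; ring
  rw [h1]
  have := cat_rec j
  rw [← h2] at h3
  nlinarith

lemma choose_aux (m j : ℕ) : 2 * (j + 1) * (m + 1).choose (2 * j + 2) + 2 * j *
    (m + 1).choose (2 * j + 1) = m * (m + 1).choose (2 * j + 1) := by
  have e : (m + 1).choose (2 * j + 1 + 1) * (2 * j + 1 + 1) =
    (m + 1).choose (2 * j + 1) * (m + 1 - (2 * j + 1)) := Nat.choose_succ_right_eq _ _
  by_cases h : 2 * j ≤ m
  · obtain ⟨k, rfl⟩ := Nat.exists_eq_add_of_le h
    rw [show 2 * j + k + 1 - (2 * j + 1) = k by omega] at e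
    linarith
  · rw [Nat.choose_eq_zero_of_lt (show m + 1 < 2 * j + 1 by omega),
      Nat.choose_eq_zero_of_lt (show m + 1 < 2 * j + 2 by omega)]
    simp

lemma gA_deriv (m : ℕ) : 2 * Polynomial.derivative (gA (m + 1)) =
    ((m + 4 : ℕ) : Polynomial ℤ) * ∑ i ∈ Finset.range (m + 1), gA i * gA (m - i) := by
  rw [Sc_deriv, Sc_conv, Finset.mul_sum, Finset.mul_sum]
  refine Finset.sum_congr rfl fun j _ => ?_
  rw [← catalan_succ', ← mul_assoc, ← mul_assoc, ← mul_assoc, ← mul_assoc]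
  congr 2
  have h1 := choose_aux m j
  have h2 := cat_rec j
  rw [← Nat.cast_mul, show (2 : Polynomial ℤ) = ((2 : ℕ) : Polynomial ℤ) by norm_num,
    ← Nat.cast_mul]
  congr 1
  zify at *
  linear_combination (catalan (j + 1) : ℤ) * h1 -
    2 * (Nat.choose (m + 1) (2 * j + 1)) * h2

lemma gB_deriv (m : ℕ) : Polynomial.derivative (gB (m + 1)) =
    (((m + 1) * (m + 2) : ℕ) : Polynomial ℤ) * gA m := by
  unfold gB gA
  rw [Sc_deriv, Sc, Finset.mul_sum]
  refine Finset.sum_congr rfl fun j _ => ?_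
  rw [← mul_assoc, ← mul_assoc]
  congr 2
  have h1 := choose_aux m j
  have h2 := Nat.succ_mul_centralBinom_succ j
  have h3 := succ_mul_catalan_eq_centralBinom j
  have h4 := Nat.add_one_mul_choose_eq m (2 * j)
  rw [← Nat.cast_mul]
  congr 1
  rw [h2, ← h3]
  zify at *
  linear_combination (2 * j + 1) * (catalan j : ℤ) * h1 - (m + 2) * (catalan j : ℤ) * h4

lemma gAB_conv (m : ℕ) : ∑ i ∈ Finset.range (m + 1), gA i * gB (m - i) =
    ((m + 1 : ℕ) : Polynomial ℤ) * gA m := by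
  rw [Sc_conv, gA, Sc, Finset.mul_sum]
  refine Finset.sum_congr rfl fun j _ => ?_
  rw [← mul_assoc, ← mul_assoc]
  congr 2
  have h4 := Nat.add_one_mul_choose_eq m (2 * j)
  rw [cat_conv, ← Nat.cast_mul]
  congr 1
  zify at *
  linear_combination  - (catalan j : ℤ) * h4

lemma KA_eq (m : ℕ) : KA (m + 2) = gA m := by
  induction m using Nat.strong_induction_on with
  | _ m ih =>
    rcases m with _ | m
    · rw [KA_two]; simp [gA, Sc]
    · refine poly_ext_deriv _ _ ?_ ?_
      · have h2 : (2 : Polynomial ℤ) ≠ 0 := two_ne_zero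
        apply mul_left_cancel₀ h2
        rw [gA_deriv, KA_deriv]
        have e1 : ∑ i ∈ Finset.range (m + 1), ((m + 1 + 1 - i : ℕ) : Polynomial ℤ) *
            (KA (i + 2) * KA (m + 1 - 1 - i + 2)) =
            ∑ i ∈ Finset.range (m + 1), ((m + 2 - i : ℕ) : Polynomial ℤ) * (gA i * gA (m - i)) := by
          refine Finset.sum_congr rfl fun i hi => ?_
          rw [Finset.mem_range] at hi
          rw [ih i hi, ih (m + 1 - 1 - i) (by omega)]
          simp
        have e2 : ∑ i ∈ Finset.range (m + 1), ((m + 2 - i : ℕ) : Polynomial ℤ) * (gA i * gA (m - i))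
            = ∑ i ∈ Finset.range (m + 1), ((i + 2 : ℕ) : Polynomial ℤ) * (gA i * gA (m - i)) := by
          rw [← Finset.sum_range_reflect]
          refine Finset.sum_congr rfl fun i hi => ?_
          rw [Finset.mem_range] at hi
          rw [show m + 1 - 1 - i = m - i by omega, show m - (m - i) = i by omega,
            show m + 2 - (m - i) = i + 2 by omega]
          ring
        rw [e1, two_mul]
        nth_rewrite 2 [e2]
        rw [← Finset.sum_add_distrib, Finset.mul_sum]
        refine Finset.sum_congr rfl fun i hi => ?_
        rw [Finset.mem_range] at hi
        rw [← add_mul, ← Nat.cast_add, show m + 2 - i + (i + 2) = m + 4 by omega]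
      · rw [Sc_coeff_zero, KA, clP_coeff_zero]; simp

lemma KD_eq (k : ℕ) : KD (k + 2) = gB (k + 2) - ((k + 2 : ℕ) : Polynomial ℤ) * pU * gA k := by
  induction k using Nat.strong_induction_on with
  | _ k ih =>
    refine poly_ext_deriv _ _ ?_ ?_
    · rw [KD_deriv (k + 2) (by omega), Polynomial.derivative_sub, gB_deriv,
        Polynomial.derivative_mul, Polynomial.derivative_mul, Polynomial.derivative_natCast,
        pU_deriv]
      have hA := KA_deriv k
      rw [KA_eq] at hA
      have e1 : ∑ i ∈ Finset.range (k + 2 - 2), KA (i + 2) * KD (k + 2 - 1 - i) =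
          ∑ i ∈ Finset.range k, gA i * gB (k + 1 - i) - pU * Polynomial.derivative (gA k) := by
        rw [hA, Finset.mul_sum, ← Finset.sum_sub_distrib]
        refine Finset.sum_congr rfl fun i hi => ?_
        rw [Finset.mem_range] at hi
        rw [show k + 2 - 1 - i = (k - 1 - i) + 2 by omega, ih _ (by omega), KA_eq, KA_eq,
          show k - 1 - i + 2 = k + 1 - i by omega]
        ring
      have e2 := gAB_conv (k + 1)
      rw [Finset.sum_range_succ, Finset.sum_range_succ] at e2
      have e3 : gB (k + 1 - k) = pW := by
        rw [show k + 1 - k = 1 by omega]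
        simp [gB, Sc, Finset.sum_range_succ, Nat.centralBinom]
      have e4 : gB (k + 1 - (k + 1)) = 1 := by
        rw [Nat.sub_self]
        simp [gB, Sc]
      rw [e3, e4] at e2
      rw [e1, eq_sub_of_add_eq (eq_sub_of_add_eq e2), show k + 2 + 1 = (k + 1) + 2 by ring, KA_eq]
      push_cast
      ring
    · rw [KD, clP_coeff_zero, Polynomial.coeff_sub, Sc_coeff_zero, Polynomial.mul_coeff_zero,
        Polynomial.mul_coeff_zero]
      simp [pU]

/-- the gamma vector of type D -/
def gamD (k : ℕ) : ℕ → ℕ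
  | 0 => 1
  | j + 1 => Nat.centralBinom (j + 1) * (k + 2).choose (2 * (j + 1)) -
      (k + 2) * (catalan j * k.choose (2 * j))

lemma gamD_le (k j : ℕ) : (k + 2) * (catalan j * k.choose (2 * j)) ≤
    Nat.centralBinom (j + 1) * (k + 2).choose (2 * (j + 1)) := by
  by_cases h : k < 2 * j
  · rw [Nat.choose_eq_zero_of_lt h]; simp
  · have h2 := Nat.succ_mul_centralBinom_succ j
    have h3 := succ_mul_catalan_eq_centralBinom j
    have h4 := Nat.add_one_mul_choose_eq k (2 * j)
    have h5 := Nat.add_one_mul_choose_eq (k + 1) (2 * j + 1)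
    rw [show 2 * (j + 1) = 2 * j + 1 + 1 by ring]
    have key : (j + 1) * (Nat.centralBinom (j + 1) * (k + 2).choose (2 * j + 1 + 1)) =
        (k + 1) * ((k + 2) * (catalan j * k.choose (2 * j))) := by
      rw [← mul_assoc, h2, ← h3]
      have e : k + 1 + 1 = k + 2 := rfl
      rw [e] at h5
      zify at *
      linear_combination (-(2 * j + 1) * (catalan j : ℤ)) * h5 - (k + 2) * (catalan j : ℤ) * h4
    have : (j + 1) * ((k + 2) * (catalan j * k.choose (2 * j))) ≤
        (j + 1) * (Nat.centralBinom (j + 1) * (k + 2).choose (2 * j + 1 + 1)) := by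
      rw [key]
      exact Nat.mul_le_mul_right _ (by omega)
    exact Nat.le_of_mul_le_mul_left this (by omega)

lemma KD_gamma (k : ℕ) : KD (k + 2) =
    ∑ j ∈ Finset.range ((k + 2) / 2 + 1), ((gamD k j : ℕ) : Polynomial ℤ) * pU ^ j *
      pW ^ (k + 2 - 2 * j) := by
  have e1 : ∑ j ∈ Finset.range ((k + 2) / 2 + 1), ((gamD k j : ℕ) : Polynomial ℤ) * pU ^ j *
      pW ^ (k + 2 - 2 * j) = ∑ j ∈ Finset.range (k + 2 + 1), ((gamD k j : ℕ) : Polynomial ℤ) *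
      pU ^ j * pW ^ (k + 2 - 2 * j) := by
    refine Finset.sum_subset ?_ ?_
    · intro x hx
      rw [Finset.mem_range] at *
      omega
    · intro x _ hx
      rw [Finset.mem_range] at hx
      obtain ⟨j, rfl⟩ : ∃ j, x = j + 1 := ⟨x - 1, by omega⟩
      rw [gamD, Nat.choose_eq_zero_of_lt (by omega)]
      simp
  rw [e1, KD_eq, gB, Sc, gA, Sc_eq catalan k (k + 2) (by omega)]
  rw [Finset.sum_range_succ' _ (k + 2), Finset.sum_range_succ' _ (k + 2), Finset.mul_sum]
  rw [add_sub_right_comm, ← Finset.sum_sub_distrib]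
  congr 1
  · refine Finset.sum_congr rfl fun j _ => ?_
    rw [gamD, Nat.cast_sub (gamD_le k j)]
    rw [show k + 2 - 2 * (j + 1) = k - 2 * j by omega]
    push_cast
    ring



lemma poly_eq_of_aeval (p q : Polynomial ℤ)
    (h : ∀ t : ℚ, t ≠ 1 → Polynomial.aeval t p = Polynomial.aeval t q) : p = q := by
  apply Polynomial.map_injective (Int.castRingHom ℚ) Int.cast_injective
  apply Polynomial.eq_of_infinite_eval_eq
  refine Set.Infinite.mono (s := {t : ℚ | t ≠ 1}) ?_ ?_
  · intro t ht
    have := h t ht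
    simpa [Polynomial.aeval_def, Polynomial.eval₂_eq_eval_map] using this
  · have : ({t : ℚ | t ≠ 1}) = ({1} : Set ℚ)ᶜ := by ext; simp
    rw [this]
    exact (Set.finite_singleton _).infinite_compl

lemma reflect_gamma (k : ℕ)
    (hcard : ∀ C ∈ cliq (RD (k + 2)) (sD (k + 2)), C.card ≤ k + 2) :
    ∑ i ∈ Finset.range (k + 2 + 1),
      ((((cliq (RD (k + 2)) (sD (k + 2))).filter (fun C => C.card = k + 2 - i)).card : ℕ)
        : Polynomial ℤ) * (Polynomial.X - 1) ^ i =
    ∑ j ∈ Finset.range ((k + 2) / 2 + 1), ((gamD k j : ℕ) : Polynomial ℤ) * Polynomial.X ^ j *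
      (1 + Polynomial.X) ^ (k + 2 - 2 * j) := by
  have hL : ∑ i ∈ Finset.range (k + 2 + 1),
      ((((cliq (RD (k + 2)) (sD (k + 2))).filter (fun C => C.card = k + 2 - i)).card : ℕ)
        : Polynomial ℤ) * (Polynomial.X - 1) ^ i =
      ∑ C ∈ cliq (RD (k + 2)) (sD (k + 2)), (Polynomial.X - 1 : Polynomial ℤ) ^ (k + 2 - C.card) := by
    rw [← Finset.sum_fiberwise_of_maps_to (t := Finset.range (k + 2 + 1))
      (g := fun C : Finset (ℕ × ℕ × ℕ) => k + 2 - C.card)]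
    · refine Finset.sum_congr rfl fun i hi => ?_
      rw [Finset.mem_range] at hi
      rw [Finset.sum_congr (g := fun _ => (Polynomial.X - 1 : Polynomial ℤ) ^ i) rfl]
      · rw [Finset.sum_const, nsmul_eq_mul]
        congr 3
        apply Finset.filter_congr
        intro C hC
        have := hcard C hC
        omega
      · intro C hC
        rw [(Finset.mem_filter.mp hC).2]
    · intro C _
      rw [Finset.mem_range]; omega
  rw [hL]
  apply poly_eq_of_aeval
  intro t ht
  have hq : t - 1 ≠ 0 := sub_ne_zero.mpr ht
  have h := congrArg (fun p => (t - 1) ^ (k + 2) * Polynomial.aeval ((t - 1)⁻¹) p) (KD_gamma k)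
  simp only [KD, clP, map_sum, map_pow, Polynomial.aeval_X, Finset.mul_sum, map_mul, map_natCast,
    pU, pW, map_add, map_one, map_ofNat] at h
  simp only [map_sum, map_pow, map_sub, Polynomial.aeval_X, map_one, map_mul, map_natCast, map_add]
  calc _ = _ := ?_
    _ = _ := h
    _ = _ := ?_
  · refine Finset.sum_congr rfl fun C hC => ?_
    rw [inv_pow, ← div_eq_mul_inv, eq_div_iff (pow_ne_zero _ hq), ← pow_add,
      Nat.sub_add_cancel (hcard C hC)]
  · refine Finset.sum_congr rfl fun j hj => ?_
    rw [Finset.mem_range] at hj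
    have e1 : (t - 1)⁻¹ * (1 + (t - 1)⁻¹) = t / (t - 1) ^ 2 := by
      field_simp; ring
    have e2 : (1 + 2 * (t - 1)⁻¹) = (1 + t) / (t - 1) := by
      field_simp; ring
    rw [e1, e2, div_pow, div_pow, ← pow_mul]
    have e3 : (t - 1) ^ (k + 2) = (t - 1) ^ (2 * j) * (t - 1) ^ (k + 2 - 2 * j) := by
      rw [← pow_add]; congr 1; omega
    rw [e3]
    have h1 : (t - 1) ^ (2 * j) ≠ 0 := pow_ne_zero _ hq
    have h2 : (t - 1) ^ (k + 2 - 2 * j) ≠ 0 := pow_ne_zero _ hq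
    generalize (t - 1) ^ (2 * j) = A at *
    generalize (t - 1) ^ (k + 2 - 2 * j) = B at *
    field_simp



/-- combinatorial face of a finite point configuration -/
def FS {E : Type*} [AddCommGroup E] [Module ℝ E] (V A : Set E) : Prop :=
  A.Nonempty ∧ ∃ f : E →ᵃ[ℝ] ℝ, (∀ v ∈ V, 0 ≤ f v) ∧ A = {v ∈ V | f v = 0}

/-- dimension of a point configuration -/
noncomputable def dm {E : Type*} [AddCommGroup E] [Module ℝ E] (A : Set E) : ℕ :=
  Module.finrank ℝ (vectorSpan ℝ A)

set_option linter.unusedSectionVars false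
section geom
variable {E : Type*} [AddCommGroup E] [Module ℝ E]

lemma FS.subset {V A : Set E} (h : FS V A) : A ⊆ V := by
  obtain ⟨_, f, _, rfl⟩ := h
  exact fun x hx => hx.1

lemma FS.self {V : Set E} (h : V.Nonempty) : FS V V := by
  refine ⟨h, 0, by simp, by simp⟩

lemma FS.restrict {V A G : Set E} (h : FS V A) (hAG : A ⊆ G) (hGV : G ⊆ V) : FS G A := by
  obtain ⟨h0, f, hf, rfl⟩ := h
  refine ⟨h0, f, fun v hv => hf v (hGV hv), ?_⟩
  ext x
  constructor
  · intro hx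
    exact ⟨hAG hx, hx.2⟩
  · intro hx
    exact ⟨hGV hx.1, hx.2⟩

lemma exists_big {V : Set E} (hV : V.Finite) (f g : E → ℝ) :
    ∃ M : ℝ, 0 ≤ M ∧ ∀ v ∈ V, 0 < f v → 0 < M * f v + g v := by
  induction V, hV using Set.Finite.induction_on with
  | empty => exact ⟨0, le_refl _, by simp⟩
  | @insert a S _ _ ih =>
    obtain ⟨M, hM0, hM⟩ := ih
    refine ⟨M + (|g a| + 1) / |f a|, by positivity, ?_⟩
    rintro v (rfl | hv) hfv
    · rw [abs_of_pos hfv, add_mul, div_mul_cancel₀ _ hfv.ne']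
      have := neg_abs_le (g v)
      have := mul_nonneg hM0 hfv.le
      linarith
    · have h1 := hM v hv hfv
      have h2 : 0 ≤ (|g a| + 1) / |f a| := by positivity
      have := mul_nonneg h2 hfv.le
      rw [add_mul]
      linarith

lemma FS.trans {V A B : Set E} (hV : V.Finite) (hA : FS V A) (hB : FS A B) : FS V B := by
  obtain ⟨_, f, hf, rfl⟩ := hA
  obtain ⟨h0, g, hg, rfl⟩ := hB
  obtain ⟨M, hM0, hM⟩ := exists_big hV f g
  refine ⟨h0, M • f + g, ?_, ?_⟩
  · intro v hv
    simp only [AffineMap.coe_add, AffineMap.coe_smul, Pi.add_apply, Pi.smul_apply, smul_eq_mul]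
    rcases (hf v hv).eq_or_lt with h | h
    · rw [← h]; have := hg v ⟨hv, h.symm⟩; linarith
    · exact (hM v hv h).le
  · ext v
    simp only [Set.mem_ofPred_eq, AffineMap.coe_add, AffineMap.coe_smul, Pi.add_apply,
      Pi.smul_apply, smul_eq_mul]
    constructor
    · rintro ⟨⟨hv, h1⟩, h2⟩
      exact ⟨hv, by rw [h1, h2]; simp⟩
    · rintro ⟨hv, h1⟩
      rcases (hf v hv).eq_or_lt with h | h
      · rw [← h] at h1
        exact ⟨⟨hv, h.symm⟩, by linarith⟩
      · exact absurd h1 (hM v hv h).ne'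

lemma FS.inter {V A B : Set E} (hA : FS V A) (hB : FS V B) (h : (A ∩ B).Nonempty) :
    FS V (A ∩ B) := by
  obtain ⟨_, f, hf, rfl⟩ := hA
  obtain ⟨_, g, hg, rfl⟩ := hB
  refine ⟨h, f + g, ?_, ?_⟩
  · intro v hv
    exact add_nonneg (hf v hv) (hg v hv)
  · ext v
    simp only [Set.mem_inter_iff, Set.mem_ofPred_eq, AffineMap.coe_add, Pi.add_apply]
    constructor
    · rintro ⟨⟨hv, h1⟩, _, h2⟩
      exact ⟨hv, by rw [h1, h2]; simp⟩
    · rintro ⟨hv, h1⟩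
      have := hf v hv
      have := hg v hv
      exact ⟨⟨hv, by linarith⟩, hv, by linarith⟩

lemma aff_zero_span {A : Set E} (f : E →ᵃ[ℝ] ℝ) (hf : ∀ a ∈ A, f a = 0) (w : E)
    (hw : w ∈ vectorSpan ℝ A) : f.linear w = 0 := by
  have : vectorSpan ℝ A ≤ LinearMap.ker f.linear := by
    rw [vectorSpan_def, Submodule.span_le]
    rintro _ ⟨a, ha, b, hb, rfl⟩
    simp only [SetLike.mem_coe, LinearMap.mem_ker]
    show f.linear (a -ᵥ b) = 0
    rw [AffineMap.linearMap_vsub, hf a ha, hf b hb]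
    simp
  exact this hw

variable [FiniteDimensional ℝ E]

lemma dm_mono {A B : Set E} (h : A ⊆ B) : dm A ≤ dm B :=
  Submodule.finrank_mono (vectorSpan_mono ℝ h)

lemma FS.dm_lt {V A B : Set E} (hA : FS V A) (hAB : A ⊆ B) (hBV : B ⊆ V) (hne : A ≠ B) :
    dm A < dm B := by
  refine lt_of_le_of_ne (dm_mono hAB) ?_
  intro he
  have hs := Submodule.eq_of_le_of_finrank_eq (vectorSpan_mono ℝ hAB) he
  obtain ⟨⟨a, ha⟩, f, hf, rfl⟩ := hA
  apply hne
  refine Set.Subset.antisymm hAB ?_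
  intro b hb
  refine ⟨hBV hb, ?_⟩
  have h1 := aff_zero_span (A := {v ∈ V | f v = 0}) f (fun a ha => ha.2) (b - a)
    (by rw [hs]; exact vsub_mem_vectorSpan ℝ hb (hAB ha))
  have h2 : f.linear (b -ᵥ a) = f b -ᵥ f a := AffineMap.linearMap_vsub f b a
  rw [vsub_eq_sub, h1, ha.2] at h2
  simpa using h2.symm

lemma ratio {G A : Set E} (hG : G.Finite) (f m : E →ᵃ[ℝ] ℝ) (hA0 : A.Nonempty)
    (hf : ∀ v ∈ G, 0 ≤ f v) (hA : A = {v ∈ G | f v = 0}) (hm : ∀ v ∈ A, m v = 0)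
    (hne : A ≠ G) : ∃ r : ℝ, (∀ v ∈ G, r * f v ≤ m v) ∧ FS G {v ∈ G | m v = r * f v} ∧
      A ⊆ {v ∈ G | m v = r * f v} ∧ A ≠ {v ∈ G | m v = r * f v} := by
  have hAG : A ⊆ G := by rw [hA]; exact fun x hx => hx.1
  have hex : (G \ A).Nonempty := by
    rw [Set.nonempty_iff_ne_empty]
    intro h
    exact hne (Set.Subset.antisymm hAG (Set.sdiff_eq_empty.mp h))
  obtain ⟨w, hw, hmin⟩ := Set.exists_min_image (G \ A) (fun v => m v / f v) (hG.sdiff) hex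
  have hpos : ∀ v ∈ G, v ∉ A → 0 < f v := by
    intro v hv hvA
    refine lt_of_le_of_ne (hf v hv) ?_
    intro h
    apply hvA
    rw [hA]
    exact ⟨hv, h.symm⟩
  have hAz : ∀ v ∈ A, f v = 0 := by
    intro v hv
    rw [hA] at hv
    exact hv.2
  have hle : ∀ v ∈ G, m w / f w * f v ≤ m v := by
    intro v hv
    by_cases hvA : v ∈ A
    · rw [hAz v hvA, hm v hvA]; simp
    · have := hmin v ⟨hv, hvA⟩
      exact (le_div_iff₀ (hpos v hv hvA)).mp this
  have hsub : A ⊆ {v ∈ G | m v = m w / f w * f v} := by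
    intro v hv
    exact ⟨hAG hv, by rw [hAz v hv, hm v hv]; simp⟩
  have hwm : w ∈ {v ∈ G | m v = m w / f w * f v} := by
    refine ⟨hw.1, ?_⟩
    have := (hpos w hw.1 hw.2).ne'
    field_simp
  refine ⟨m w / f w, hle, ⟨hA0.mono hsub, m - (m w / f w) • f, ?_, ?_⟩, hsub, ?_⟩
  · intro v hv
    have := hle v hv
    simp only [AffineMap.coe_sub, AffineMap.coe_smul, Pi.sub_apply, Pi.smul_apply, smul_eq_mul]
    linarith
  · ext v
    simp only [Set.mem_ofPred_eq, AffineMap.coe_sub, AffineMap.coe_smul, Pi.sub_apply,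
      Pi.smul_apply, smul_eq_mul, sub_eq_zero]
  · intro h
    rw [← h] at hwm
    exact hw.2 hwm

lemma exists_aff {S : Set E} {a v : E} (ha : a ∈ S) (hv : v - a ∉ vectorSpan ℝ S) :
    ∃ m : E →ᵃ[ℝ] ℝ, (∀ x ∈ S, m x = 0) ∧ m v ≠ 0 := by
  obtain ⟨l, hl, hle⟩ := Submodule.exists_le_ker_of_notMem hv
  refine ⟨l.toAffineMap - AffineMap.const ℝ E (l a), ?_, ?_⟩
  · intro x hx
    have h1 : x - a ∈ vectorSpan ℝ S := vsub_mem_vectorSpan ℝ hx ha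
    have := hle h1
    rw [LinearMap.mem_ker, map_sub] at this
    simpa using this
  · rw [map_sub] at hl
    simpa using hl

/-- a face of codimension at least two is the intersection of two larger proper faces -/
lemma two_faces {G A : Set E} (hG : G.Finite) (hA : FS G A) (hd : dm A + 2 ≤ dm G) :
    ∃ G1 G2 : Set E, FS G G1 ∧ FS G G2 ∧ A ⊆ G1 ∧ A ≠ G1 ∧ A ⊆ G2 ∧ A ≠ G2 ∧ G1 ≠ G ∧ G2 ≠ G ∧
      G1 ∩ G2 = A := by
  obtain ⟨⟨a, ha⟩, f, hf, hAe⟩ := hA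
  have hAG : A ⊆ G := by rw [hAe]; exact fun x hx => hx.1
  have hne : A ≠ G := by rintro rfl; omega
  obtain ⟨v1, hv1, hv1A⟩ : ∃ v ∈ G, v ∉ A := by
    by_contra hcon
    push Not at hcon
    exact hne (Set.Subset.antisymm hAG hcon)
  have hfv1 : f v1 ≠ 0 := by
    intro h; apply hv1A; rw [hAe]; exact ⟨hv1, h⟩
  obtain ⟨v2, hv2, hv2n⟩ : ∃ v ∈ G, v - a ∉ vectorSpan ℝ (insert v1 A) := by
    by_contra hcon
    push Not at hcon
    have h1 : vectorSpan ℝ G ≤ vectorSpan ℝ (insert v1 A) := by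
      rw [vectorSpan_eq_span_vsub_set_right ℝ (hAG ha), Submodule.span_le]
      rintro _ ⟨x, hx, rfl⟩
      exact hcon x hx
    have h2 := Submodule.finrank_mono h1
    have h3 : Module.finrank ℝ (vectorSpan ℝ (insert v1 A)) ≤
      Module.finrank ℝ (vectorSpan ℝ A) + 1 := finrank_vectorSpan_insert_le_set ℝ A v1
    unfold dm at hd
    omega
  obtain ⟨m, hm, hmv2⟩ := exists_aff (Set.mem_insert_of_mem v1 ha) hv2n
  have hmA : ∀ v ∈ A, m v = 0 := fun v hv => hm v (Set.mem_insert_of_mem v1 hv)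
  have hmv1 : m v1 = 0 := hm v1 (Set.mem_insert v1 A)
  obtain ⟨r, hr, hF1, hs1, hn1⟩ := ratio hG f m ⟨a, ha⟩ hf hAe hmA hne
  obtain ⟨q, hq, hF2, hs2, hn2⟩ := ratio hG f (-m) ⟨a, ha⟩ hf hAe
    (fun v hv => by simp [hmA v hv]) hne
  have hnp : ∀ c : ℝ, ¬ ∀ v ∈ G, m v = c * f v := by
    intro c hc
    have h1 := hc v1 hv1
    rw [hmv1] at h1
    have hc0 : c = 0 := by
      rcases mul_eq_zero.mp h1.symm with h | h
      · exact h
      · exact absurd h hfv1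
    apply hmv2
    rw [hc v2 hv2, hc0, zero_mul]
  refine ⟨_, _, hF1, hF2, hs1, hn1, hs2, hn2, ?_, ?_, ?_⟩
  · intro h
    apply hnp r
    intro v hv
    rw [← h] at hv
    exact hv.2
  · intro h
    apply hnp (-q)
    intro v hv
    rw [← h] at hv
    have := hv.2
    simp only [AffineMap.coe_neg, Pi.neg_apply] at this
    linarith
  · refine Set.Subset.antisymm ?_ (Set.subset_inter hs1 hs2)
    rintro v ⟨⟨hv, h1⟩, _, h2⟩
    simp only [AffineMap.coe_neg, Pi.neg_apply] at h2
    rw [hAe]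
    refine ⟨hv, ?_⟩
    by_contra hfv
    have hrq : r = -q := by
      have : (r + q) * f v = 0 := by rw [add_mul]; linarith
      rcases mul_eq_zero.mp this with h | h
      · linarith
      · exact absurd h hfv
    apply hnp r
    intro x hx
    have e1 := hr x hx
    have e2 := hq x hx
    simp only [AffineMap.coe_neg, Pi.neg_apply] at e2
    rw [hrq] at e1 ⊢
    linarith

/-- facets of a point configuration -/
def Ft (V H : Set E) : Prop := FS V H ∧ dm H + 1 = dm V

lemma Ft.fs {V H : Set E} (h : Ft V H) : FS V H := h.1

lemma eq_inter_facets {V : Set E} (hV : V.Finite) (k : ℕ) (A : Set E) (hA : FS V A)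
    (hk : dm V - dm A = k) (v : E) (hv : v ∈ V) (h : ∀ H, Ft V H → A ⊆ H → v ∈ H) : v ∈ A := by
  induction k using Nat.strong_induction_on generalizing A with
  | _ k ih =>
    by_cases hAV : A = V
    · rw [hAV]; exact hv
    have hlt := hA.dm_lt hA.subset (Set.Subset.refl V) hAV
    by_cases h1 : dm A + 1 = dm V
    · exact h A ⟨hA, h1⟩ (Set.Subset.refl A)
    obtain ⟨G1, G2, hF1, hF2, hs1, hn1, hs2, hn2, _, _, hi⟩ := two_faces hV hA (by omega)
    rw [← hi]
    have d1 := hA.dm_lt hs1 hF1.subset hn1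
    have d2 := hA.dm_lt hs2 hF2.subset hn2
    exact ⟨ih (dm V - dm G1) (by omega) G1 hF1 rfl fun H hH hG => h H hH (hs1.trans hG),
      ih (dm V - dm G2) (by omega) G2 hF2 rfl fun H hH hG => h H hH (hs2.trans hG)⟩

lemma exists_cover {V : Set E} (hV : V.Finite) {A H : Set E} (hA : FS V A) (hH : FS V H)
    (hAH : A ⊆ H) (k : ℕ) (G : Set E) (hk : dm G = k) (hG : FS V G) (hAG : A ⊆ G)
    (hGH : ¬ G ⊆ H) :
    ∃ F, FS V F ∧ A ⊆ F ∧ F ⊆ G ∧ ¬ F ⊆ H ∧ dm F = dm A + 1 := by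
  induction k using Nat.strong_induction_on generalizing G with
  | _ k ih =>
    have hne : A ≠ G := by rintro rfl; exact hGH hAH
    have hlt := hA.dm_lt hAG hG.subset hne
    by_cases h1 : dm G = dm A + 1
    · exact ⟨G, hG, hAG, Set.Subset.refl G, hGH, h1⟩
    have hGf : G.Finite := hV.subset hG.subset
    have hAinG := hA.restrict hAG hG.subset
    suffices hs : ∃ G', FS G G' ∧ A ⊆ G' ∧ G' ≠ G ∧ ¬ G' ⊆ H by
      obtain ⟨G', hG', hAG', hnG', hG'H⟩ := hs
      have hd := hG'.dm_lt hG'.subset (Set.Subset.refl G) hnG'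
      obtain ⟨F, hF1, hF2, hF3, hF4, hF5⟩ := ih (dm G') (by omega) G' rfl (hG.trans hV hG')
        hAG' hG'H
      exact ⟨F, hF1, hF2, hF3.trans hG'.subset, hF4, hF5⟩
    obtain ⟨hA0, f, hf, hAe⟩ := hAinG
    obtain ⟨_, m, hm, hHe⟩ := id hH
    have hmA : ∀ v ∈ A, (-m) v = 0 := by
      intro v hv
      have := hAH hv
      rw [hHe] at this
      simp [this.2]
    obtain ⟨r, hr, hF1, hs1, hn1⟩ := ratio hGf f (-m) hA0 hf hAe hmA hne
    obtain ⟨w, hw, hwH⟩ := Set.not_subset.mp hGH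
    have hmw : 0 < m w := by
      refine lt_of_le_of_ne (hm w (hG.subset hw)) ?_
      intro h
      apply hwH
      rw [hHe]
      exact ⟨hG.subset hw, h.symm⟩
    have hr0 : r ≠ 0 := by
      intro h0
      have := hr w hw
      rw [h0] at this
      simp only [AffineMap.coe_neg, Pi.neg_apply] at this
      linarith
    have hkey : {v ∈ G | (-m) v = r * f v} ∩ H ⊆ A := by
      rintro v ⟨⟨hv, h2⟩, hvH⟩
      rw [hHe] at hvH
      rw [hAe]
      refine ⟨hv, ?_⟩
      simp only [AffineMap.coe_neg, Pi.neg_apply] at h2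
      rw [hvH.2] at h2
      rcases mul_eq_zero.mp (show r * f v = 0 by linarith) with h | h
      · exact absurd h hr0
      · exact h
    by_cases hGG : {v ∈ G | (-m) v = r * f v} = G
    · rw [hGG] at hkey
      obtain ⟨G1, G2, hF1, hF2, hs1, hn1, hs2, hn2, hp, _, hi⟩ := two_faces hGf
        ⟨hA0, f, hf, hAe⟩ (by omega)
      refine ⟨G1, hF1, hs1, hp, ?_⟩
      intro hc
      exact hn1 (Set.Subset.antisymm hs1 ((Set.subset_inter hF1.subset hc).trans hkey))
    · refine ⟨_, hF1, hs1, hGG, ?_⟩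
      intro hc
      exact hn1 (Set.Subset.antisymm hs1 ((Set.subset_inter (Set.Subset.refl _) hc).trans hkey))

lemma exists_vertex {V : Set E} (hV : V.Finite) (k : ℕ) (A : Set E) (hA : FS V A)
    (hk : dm A = k) : ∃ v ∈ A, FS V {v} := by
  induction k using Nat.strong_induction_on generalizing A with
  | _ k ih =>
    obtain ⟨a, ha⟩ := hA.1
    by_cases hs : A = {a}
    · exact ⟨a, ha, hs ▸ hA⟩
    obtain ⟨b, hb, hba⟩ : ∃ b ∈ A, b ≠ a := by
      by_contra hcon
      push Not at hcon
      apply hs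
      ext x
      constructor
      · intro hx; exact hcon x hx
      · rintro rfl; exact ha
    obtain ⟨m, hm, hmb⟩ := exists_aff (S := {a}) (a := a) (v := b) rfl
      (by rw [vectorSpan_singleton, Submodule.mem_bot]; exact sub_ne_zero.mpr hba)
    have hma : m a = 0 := hm a rfl
    obtain ⟨w, hw, hmin⟩ := Set.exists_min_image A m (hV.subset hA.subset) ⟨a, ha⟩
    have hF : FS A {v ∈ A | m v = m w} := by
      refine ⟨⟨w, hw, rfl⟩, m - AffineMap.const ℝ E (m w), ?_, ?_⟩
      · intro v hv
        have := hmin v hv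
        simpa using this
      · ext v
        simp [sub_eq_zero]
    have hne : {v ∈ A | m v = m w} ≠ A := by
      intro h
      have h1 : a ∈ {v ∈ A | m v = m w} := by rw [h]; exact ha
      have h2 : b ∈ {v ∈ A | m v = m w} := by rw [h]; exact hb
      apply hmb
      rw [h2.2, ← h1.2, hma]
    have hd := hF.dm_lt hF.subset (Set.Subset.refl A) hne
    obtain ⟨v, hv, hvF⟩ := ih _ (by omega) _ (hA.trans hV hF) rfl
    exact ⟨v, hv.1, hvF⟩

/-- facets containing a face -/
def CF (V A : Set E) : Set (Set E) := {H | Ft V H ∧ A ⊆ H}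

lemma CF_finite {V : Set E} (hV : V.Finite) (A : Set E) : (CF V A).Finite :=
  (hV.finite_subsets).subset fun _ hH => hH.1.1.subset

lemma CF_inj {V : Set E} (hV : V.Finite) {A B : Set E} (hA : FS V A) (hB : FS V B)
    (h : CF V A ⊆ CF V B) : B ⊆ A := by
  intro v hv
  exact eq_inter_facets hV _ A hA rfl v (hB.subset hv) fun H hH hAH => (h ⟨hH, hAH⟩).2 hv

lemma CF_step {V : Set E} (hV : V.Finite) {A G : Set E} (hA : FS V A) (hG : FS V G)
    (hAG : A ⊆ G) (hne : A ≠ G) :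
    ∃ F, FS V F ∧ A ⊆ F ∧ F ⊆ G ∧ dm F = dm A + 1 ∧ (CF V F).ncard < (CF V A).ncard := by
  have hn : ¬ G ⊆ A := fun h => hne (Set.Subset.antisymm hAG h)
  obtain ⟨F, h1, h2, h3, h4, h5⟩ := exists_cover hV hA hA (Set.Subset.refl A) _ G rfl hG hAG hn
  refine ⟨F, h1, h2, h3, h5, Set.ncard_lt_ncard ?_ (CF_finite hV A)⟩
  refine ⟨fun H hH => ⟨hH.1, h2.trans hH.2⟩, fun hc => h4 (CF_inj hV hA h1 hc)⟩

lemma CF_ge {V : Set E} (hV : V.Finite) (k : ℕ) (A : Set E) (hA : FS V A)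
    (hk : dm V - dm A = k) : dm V ≤ (CF V A).ncard + dm A := by
  induction k generalizing A with
  | zero => omega
  | succ k ih =>
    have hne : A ≠ V := by rintro rfl; omega
    obtain ⟨F, h1, h2, h3, h4, h5⟩ := CF_step hV hA (FS.self (hA.1.mono hA.subset)) hA.subset hne
    have := ih F h1 (by omega)
    omega

lemma CF_le_aux {V : Set E} (hV : V.Finite) (k : ℕ) (A B : Set E) (hA : FS V A) (hB : FS V B)
    (hBA : B ⊆ A) (hk : dm A - dm B = k) (h : (CF V B).ncard + dm B ≤ dm V) :
    (CF V A).ncard + dm A ≤ dm V := by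
  induction k generalizing B with
  | zero =>
    have : B = A := by
      by_contra hne
      have := hB.dm_lt hBA hA.subset hne
      omega
    rwa [← this]
  | succ k ih =>
    have hne : B ≠ A := by rintro rfl; omega
    obtain ⟨F, h1, h2, h3, h4, h5⟩ := CF_step hV hB hA hBA hne
    exact ih F h1 h3 (by omega) (by omega)

/-- combinatorial simplicity -/
def Simp (V : Set E) : Prop := ∀ v, FS V {v} → (CF V {v}).ncard = dm V

lemma dm_singleton (v : E) : dm ({v} : Set E) = 0 := by
  unfold dm
  rw [vectorSpan_singleton]
  simp

lemma CF_card {V : Set E} (hV : V.Finite) (hs : Simp V) (A : Set E) (hA : FS V A) :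
    (CF V A).ncard + dm A = dm V := by
  obtain ⟨v, hv, hvF⟩ := exists_vertex hV _ A hA rfl
  refine le_antisymm ?_ (CF_ge hV _ A hA rfl)
  refine CF_le_aux hV _ A {v} hA hvF (by simpa using hv) rfl ?_
  rw [hs v hvF, dm_singleton]
  simp

lemma FS_sInter {V : Set E} (v : E) (hv : v ∈ V) (T : Set (Set E)) (hT : T.Finite)
    (h : ∀ H ∈ T, FS V H) (hvT : ∀ H ∈ T, v ∈ H) : FS V {x ∈ V | ∀ H ∈ T, x ∈ H} := by
  induction T, hT using Set.Finite.induction_on with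
  | empty => simpa using FS.self ⟨v, hv⟩
  | @insert a S _ _ ih =>
    have h1 := ih (fun H hH => h H (Set.mem_insert_of_mem a hH))
      (fun H hH => hvT H (Set.mem_insert_of_mem a hH))
    have h2 := FS.inter (h a (Set.mem_insert a S)) h1
      ⟨v, hvT a (Set.mem_insert a S), hv, fun H hH => hvT H (Set.mem_insert_of_mem a hH)⟩
    convert h2 using 1
    ext x
    simp only [Set.mem_ofPred_eq, Set.mem_insert_iff, forall_eq_or_imp, Set.mem_inter_iff]
    tauto

/-- sets of facets with a common point are exactly the sets `CF V A` -/
lemma exists_face {V : Set E} (hV : V.Finite) (hs : Simp V) (T : Set (Set E))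
    (hT : ∀ H ∈ T, Ft V H) (v : E) (hv : v ∈ V) (hvT : ∀ H ∈ T, v ∈ H) :
    ∃ A, FS V A ∧ CF V A = T := by
  have hTf : T.Finite := (hV.finite_subsets).subset fun H hH => (hT H hH).1.subset
  have hF := FS_sInter v hv T hTf (fun H hH => (hT H hH).1) hvT
  refine ⟨_, hF, ?_⟩
  refine Set.Subset.antisymm ?_ ?_
  swap
  · intro H hH
    exact ⟨hT H hH, fun x hx => hx.2 H hH⟩
  rintro j ⟨hj, hFj⟩
  by_contra hjT
  obtain ⟨u, hu, huF⟩ := exists_vertex hV _ _ hF rfl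
  have huj : {u} ⊆ j := by
    rintro _ rfl
    exact hFj hu
  have hVj : ¬ V ⊆ j := by
    intro hc
    have h1 : j = V := Set.Subset.antisymm hj.1.subset hc
    have := hj.2
    rw [h1] at this
    omega
  obtain ⟨e, he1, he2, he3, he4, he5⟩ := exists_cover hV huF hj.1 huj _ V rfl
    (FS.self ⟨v, hv⟩) (by simpa using hu.1) hVj
  have c1 := CF_card hV hs e he1
  have c2 := hs u huF
  rw [dm_singleton] at he5
  have hsub : CF V e ⊆ CF V {u} \ {j} := by
    rintro H ⟨hH, heH⟩
    refine ⟨⟨hH, he2.trans heH⟩, ?_⟩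
    rintro rfl
    exact he4 heH
  have heq : CF V e = CF V {u} \ {j} := by
    refine Set.eq_of_subset_of_ncard_le hsub ?_ ((CF_finite hV _).sdiff)
    rw [Set.ncard_sdiff_singleton_of_mem (show j ∈ CF V {u} from ⟨hj, huj⟩)]
    omega
  apply he4
  refine Set.Subset.trans ?_ hFj
  intro x hx
  refine ⟨he1.subset hx, ?_⟩
  intro H hH
  have : H ∈ CF V e := by
    rw [heq]
    refine ⟨⟨hT H hH, ?_⟩, ?_⟩
    · rintro _ rfl
      exact hu.2 H hH
    · rintro rfl
      exact hjT hH
  exact this.2 hx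

end geom



lemma aff_sum {E : Type*} [AddCommGroup E] [Module ℝ E] (f : E →ᵃ[ℝ] ℝ) (V : Finset E)
    (w : E → ℝ) (hw : ∑ y ∈ V, w y = 1) : f (∑ y ∈ V, w y • y) = ∑ y ∈ V, w y * f y := by
  have h : ∀ x, f x = f.linear x + f 0 := fun x => by
    have := congrFun (AffineMap.decomp f) x
    simpa using this
  rw [h, map_sum]
  have : ∀ y ∈ V, w y * f y = f.linear (w y • y) + w y * f 0 := by
    intro y _
    rw [h y, map_smul, smul_eq_mul]; ring
  rw [Finset.sum_congr rfl this, Finset.sum_add_distrib, ← Finset.sum_mul, hw, one_mul]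

lemma hull_weights {E : Type*} [AddCommGroup E] [Module ℝ E] (V : Finset E) (x : E)
    (hx : x ∈ convexHull ℝ (V : Set E)) : ∃ w : E → ℝ, (∀ y ∈ V, 0 ≤ w y) ∧ ∑ y ∈ V, w y = 1 ∧
      ∑ y ∈ V, w y • y = x ∧ ∀ f : E →ᵃ[ℝ] ℝ, (∀ v ∈ V, 0 ≤ f v) → f x = 0 →
        ∀ y ∈ V, w y ≠ 0 → f y = 0 := by
  obtain ⟨w, h0, h1, h2⟩ := Finset.mem_convexHull'.mp hx
  refine ⟨w, h0, h1, h2, ?_⟩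
  intro f hf hfx y hy hwy
  rw [← h2, aff_sum f V w h1] at hfx
  have := (Finset.sum_eq_zero_iff_of_nonneg (fun y hy => mul_nonneg (h0 y hy) (hf y hy))).mp hfx
    y hy
  rcases mul_eq_zero.mp this with h | h
  · exact absurd h hwy
  · exact h

lemma hull_carrier {E : Type*} [AddCommGroup E] [Module ℝ E] (V : Finset E) (x : E)
    (hx : x ∈ convexHull ℝ (V : Set E)) : ∃ v ∈ V, ∀ f : E →ᵃ[ℝ] ℝ, (∀ v ∈ V, 0 ≤ f v) →
      f x = 0 → f v = 0 := by
  obtain ⟨w, h0, h1, h2, h3⟩ := hull_weights V x hx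
  obtain ⟨v, hv, hwv⟩ : ∃ v ∈ V, w v ≠ 0 := by
    by_contra hcon
    push Not at hcon
    rw [Finset.sum_eq_zero hcon] at h1
    exact zero_ne_one h1
  exact ⟨v, hv, fun f hf hfx => h3 f hf hfx v hv hwv⟩

lemma aff_nonneg_hull {E : Type*} [AddCommGroup E] [Module ℝ E] (V : Set E) (f : E →ᵃ[ℝ] ℝ)
    (hf : ∀ v ∈ V, 0 ≤ f v) (x : E) (hx : x ∈ convexHull ℝ V) : 0 ≤ f x := by
  have : convexHull ℝ V ⊆ f ⁻¹' (Set.Ici 0) :=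
    convexHull_min hf ((convex_Ici 0).affine_preimage f)
  exact this hx

lemma hull_zero {E : Type*} [AddCommGroup E] [Module ℝ E] (V : Finset E) (f : E →ᵃ[ℝ] ℝ)
    (hf : ∀ v ∈ V, 0 ≤ f v) :
    convexHull ℝ {v ∈ (V : Set E) | f v = 0} = {x ∈ convexHull ℝ (V : Set E) | f x = 0} := by
  apply Set.Subset.antisymm
  · intro x hx
    refine ⟨convexHull_mono (fun v hv => hv.1) hx, ?_⟩
    have : convexHull ℝ {v ∈ (V : Set E) | f v = 0} ⊆ f ⁻¹' {0} :=
      convexHull_min (fun v hv => hv.2) ((convex_singleton 0).affine_preimage f)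
    exact this hx
  · rintro x ⟨hx, hfx⟩
    classical
    obtain ⟨w, h0, h1, h2, h3⟩ := hull_weights V x hx
    have e1 : ∑ y ∈ V.filter (fun y => w y ≠ 0), w y = 1 := by
      rw [← h1]
      exact Finset.sum_filter_of_ne (fun y _ h => h)
    have e2 : ∑ y ∈ V.filter (fun y => w y ≠ 0), w y • y = x := by
      rw [← h2]
      refine Finset.sum_filter_of_ne (fun y _ h hw => h ?_)
      rw [hw, zero_smul]
    rw [← e2]
    refine (convex_convexHull ℝ _).sum_mem ?_ e1 ?_
    · intro y hy
      exact h0 y (Finset.mem_filter.mp hy).1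
    · intro y hy
      rw [Finset.mem_filter] at hy
      exact subset_convexHull ℝ _ ⟨hy.1, h3 f hf hfx y hy.1 hy.2⟩

section trans
variable {d : ℕ}

lemma face_iff (F P : Set (Fin d → ℝ)) : IsFaceOf F P ↔ FS P F := by
  constructor
  · rintro ⟨h0, h⟩
    refine ⟨h0, ?_⟩
    obtain ⟨l, hl⟩ := h h0
    obtain ⟨x0, hx0⟩ := h0
    have hx0' := hx0
    rw [hl] at hx0'
    refine ⟨AffineMap.const ℝ _ (l x0) - l.toLinearMap.toAffineMap, ?_, ?_⟩
    · intro v hv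
      have := hx0'.2 v hv
      simpa using this
    · rw [hl]
      ext x
      simp only [Set.mem_ofPred_eq, AffineMap.coe_sub, Pi.sub_apply, AffineMap.const_apply,
        LinearMap.coe_toAffineMap, ContinuousLinearMap.coe_coe, sub_eq_zero]
      constructor
      · rintro ⟨hx, h1⟩
        exact ⟨hx, le_antisymm (h1 x0 hx0'.1) (hx0'.2 x hx)⟩
      · rintro ⟨hx, h1⟩
        exact ⟨hx, fun y hy => h1 ▸ hx0'.2 y hy⟩
  · rintro ⟨h0, f, hf, hF⟩
    refine ⟨h0, fun _ => ⟨(-LinearMap.toContinuousLinearMap f.linear), ?_⟩⟩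
    have h : ∀ x, f x = f.linear x + f 0 := fun x => by
      have := congrFun (AffineMap.decomp f) x
      simpa using this
    obtain ⟨x0, hx0⟩ := h0
    rw [hF] at hx0
    rw [hF]
    ext x
    simp only [Set.mem_ofPred_eq, neg_apply,
      LinearMap.coe_toContinuousLinearMap', neg_le_neg_iff]
    constructor
    · rintro ⟨hx, h1⟩
      refine ⟨hx, fun y hy => ?_⟩
      have := hf y hy
      rw [h] at this h1
      linarith
    · rintro ⟨hx, h1⟩
      refine ⟨hx, ?_⟩
      have e1 := h1 x0 hx0.1
      have e2 := hf x hx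
      have e3 := hx0.2
      rw [h] at e2 e3 ⊢
      linarith

lemma polyDim_hull (A : Set (Fin d → ℝ)) : polyDim (convexHull ℝ A) = dm A := by
  unfold polyDim dm
  rw [affineSpan_convexHull, direction_affineSpan]

lemma FS_hull {V : Finset (Fin d → ℝ)} {A : Set (Fin d → ℝ)} (h : FS (V : Set _) A) :
    FS (convexHull ℝ (V : Set (Fin d → ℝ))) (convexHull ℝ A) := by
  obtain ⟨h0, f, hf, rfl⟩ := h
  exact ⟨h0.convexHull, f, fun v hv => aff_nonneg_hull _ f hf v hv, hull_zero V f hf⟩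

lemma hull_inter {V : Finset (Fin d → ℝ)} {A : Set (Fin d → ℝ)} (h : FS (V : Set _) A) :
    (V : Set _) ∩ convexHull ℝ A = A := by
  obtain ⟨h0, f, hf, rfl⟩ := h
  rw [hull_zero V f hf]
  ext x
  constructor
  · rintro ⟨hx, _, h⟩
    exact ⟨hx, h⟩
  · rintro ⟨hx, h⟩
    exact ⟨hx, subset_convexHull ℝ _ hx, h⟩

lemma FS_inter {V : Finset (Fin d → ℝ)} {F : Set (Fin d → ℝ)}
    (h : FS (convexHull ℝ (V : Set (Fin d → ℝ))) F) :
    FS (V : Set _) ((V : Set _) ∩ F) ∧ convexHull ℝ ((V : Set _) ∩ F) = F := by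
  obtain ⟨⟨x, hx⟩, f, hf, hF⟩ := h
  have hf' : ∀ v ∈ V, 0 ≤ f v := fun v hv => hf v (subset_convexHull ℝ _ hv)
  have e : (V : Set _) ∩ F = {v ∈ (V : Set (Fin d → ℝ)) | f v = 0} := by
    rw [hF]
    ext v
    constructor
    · rintro ⟨hv, _, h⟩
      exact ⟨hv, h⟩
    · rintro ⟨hv, h⟩
      exact ⟨hv, subset_convexHull ℝ _ hv, h⟩
  refine ⟨⟨?_, f, hf', e⟩, ?_⟩
  · rw [hF] at hx
    obtain ⟨v, hv, h⟩ := hull_carrier V x hx.1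
    rw [e]
    exact ⟨v, hv, h f hf' hx.2⟩
  · rw [e, hull_zero V f hf', hF]

lemma Ft_hull {V : Finset (Fin d → ℝ)} {A : Set (Fin d → ℝ)} (h : Ft (V : Set _) A) :
    IsFacetOf (convexHull ℝ A) (convexHull ℝ (V : Set (Fin d → ℝ))) := by
  refine ⟨(face_iff _ _).mpr (FS_hull h.1), ?_⟩
  rw [polyDim_hull, polyDim_hull]
  exact h.2

lemma Ft_inter {V : Finset (Fin d → ℝ)} {F : Set (Fin d → ℝ)}
    (h : IsFacetOf F (convexHull ℝ (V : Set (Fin d → ℝ)))) :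
    Ft (V : Set _) ((V : Set _) ∩ F) ∧ convexHull ℝ ((V : Set _) ∩ F) = F := by
  obtain ⟨h1, h2⟩ := h
  obtain ⟨h3, h4⟩ := FS_inter ((face_iff _ _).mp h1)
  refine ⟨⟨h3, ?_⟩, h4⟩
  rw [← h4, polyDim_hull, polyDim_hull] at h2
  exact h2

lemma simp_of_simple {V : Finset (Fin d → ℝ)}
    (h : IsSimplePolytope (convexHull ℝ (V : Set (Fin d → ℝ)))) :
    Simp (V : Set (Fin d → ℝ)) := by
  intro v hv
  have h1 := h.2 v (by
    have := FS_hull hv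
    rw [convexHull_singleton] at this
    exact (face_iff _ _).mpr this)
  rw [polyDim_hull] at h1
  rw [← h1]
  refine Set.ncard_congr (fun H _ => convexHull ℝ H) ?_ ?_ ?_
  · rintro H ⟨hH, hvH⟩
    exact ⟨Ft_hull hH, subset_convexHull ℝ _ (hvH rfl)⟩
  · rintro H H' ⟨hH, _⟩ ⟨hH', _⟩ he
    rw [← hull_inter hH.1, ← hull_inter hH'.1]
    rw [he]
  · rintro F ⟨hF, hvF⟩
    obtain ⟨h3, h4⟩ := Ft_inter hF
    refine ⟨_, ⟨h3, ?_⟩, h4⟩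
    rintro _ rfl
    exact ⟨hv.subset rfl, hvF⟩

/-- faces of a flag simple polytope correspond to cliques of its facet graph -/
lemma faces_count {ι : Type*} (n : ℕ) (P : Set (Fin d → ℝ)) (s : Finset ι)
    (R : ι → ι → Prop) (φ : ι → Set (Fin d → ℝ)) (hP : IsPolytope P) (hflag : IsFlagPolytope P)
    (hn : polyDim P = n) (hn0 : 1 ≤ n) (hφ : ∀ x ∈ s, IsFacetOf (φ x) P)
    (hinj : ∀ x ∈ s, ∀ y ∈ s, φ x = φ y → x = y) (hsurj : ∀ F, IsFacetOf F P → ∃ x ∈ s, φ x = F)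
    (hc : ∀ x ∈ s, ∀ y ∈ s, x ≠ y → ((φ x ∩ φ y).Nonempty ↔ R x y)) :
    (∀ C ∈ cliq R s, C.card ≤ n) ∧ ∀ i ≤ n, {F | IsFaceOf F P ∧ polyDim F = i}.ncard =
      ((cliq R s).filter (fun C => C.card = n - i)).card := by
  classical
  obtain ⟨V, rfl⟩ := hP
  have hV : (V : Set (Fin d → ℝ)).Finite := V.finite_toSet
  have hs := simp_of_simple hflag.1
  rw [polyDim_hull] at hn
  have hVne : (V : Set (Fin d → ℝ)).Nonempty := by
    rw [Set.nonempty_iff_ne_empty]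
    intro h
    rw [h] at hn
    have h0 : dm (∅ : Set (Fin d → ℝ)) = 0 := by
      unfold dm
      rw [vectorSpan_empty]
      simp
    omega
  -- cardinalities
  have hcard : ∀ A, FS (V : Set _) A → (s.filter (fun x => A ⊆ φ x)).card + dm A = n := by
    intro A hA
    rw [← hn, ← CF_card hV hs A hA]
    congr 1
    rw [← Set.ncard_coe_finset]
    refine Set.ncard_congr (fun x _ => (V : Set _) ∩ φ x) ?_ ?_ ?_
    · intro x hx
      rw [Finset.mem_coe, Finset.mem_filter] at hx
      exact ⟨(Ft_inter (hφ x hx.1)).1, Set.subset_inter hA.subset hx.2⟩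
    · intro x y hx hy he
      rw [Finset.mem_coe, Finset.mem_filter] at hx hy
      apply hinj x hx.1 y hy.1
      rw [← (Ft_inter (hφ x hx.1)).2, ← (Ft_inter (hφ y hy.1)).2]
      rw [he]
    · rintro H ⟨hH, hAH⟩
      obtain ⟨x, hx, hxH⟩ := hsurj _ (Ft_hull hH)
      refine ⟨x, ?_, ?_⟩
      · rw [Finset.mem_coe, Finset.mem_filter, hxH]
        exact ⟨hx, hAH.trans (subset_convexHull ℝ _)⟩
      · skip
        rw [hxH, hull_inter hH.1]
  have hclq : ∀ A, FS (V : Set _) A → s.filter (fun x => A ⊆ φ x) ∈ cliq R s := by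
    intro A hA
    rw [mem_cliq]
    refine ⟨Finset.filter_subset _ _, ?_⟩
    intro x hx y hy hxy
    rw [Finset.mem_filter] at hx hy
    rw [← hc x hx.1 y hy.1 hxy]
    obtain ⟨a, ha⟩ := hA.1
    exact ⟨a, hx.2 ha, hy.2 ha⟩
  have hsur : ∀ C ∈ cliq R s, ∃ A, FS (V : Set _) A ∧ s.filter (fun x => A ⊆ φ x) = C := by
    intro C hC
    rw [mem_cliq] at hC
    obtain ⟨v, hv, hvC⟩ : ∃ v ∈ (V : Set _), ∀ x ∈ C, v ∈ φ x := by
      by_cases hC0 : C = ∅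
      · obtain ⟨v, hv⟩ := hVne
        exact ⟨v, hv, by simp [hC0]⟩
      · obtain ⟨c, hcC⟩ := Finset.nonempty_iff_ne_empty.mpr hC0
        obtain ⟨p, hp⟩ := hflag.2 (φ '' (C : Set ι)) ⟨φ c, c, hcC, rfl⟩
          (by
            rintro _ ⟨x, hx, rfl⟩
            exact hφ x (hC.1 hx))
          (by
            rintro _ ⟨x, hx, rfl⟩ _ ⟨y, hy, rfl⟩
            by_cases hxy : x = y
            · rw [hxy, Set.inter_self]
              exact (hφ y (hC.1 hy)).1.1
            · exact (hc x (hC.1 hx) y (hC.1 hy) hxy).mpr (hC.2 x hx y hy hxy))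
        have hp' : ∀ x ∈ C, p ∈ φ x := fun x hx => hp (φ x) ⟨x, hx, rfl⟩
        have hpP : p ∈ convexHull ℝ (V : Set (Fin d → ℝ)) :=
          ((face_iff _ _).mp (hφ c (hC.1 hcC)).1).subset (hp' c hcC)
        obtain ⟨v, hv, hvf⟩ := hull_carrier V p hpP
        refine ⟨v, hv, ?_⟩
        intro x hx
        obtain ⟨_, f, hf, hfe⟩ := (face_iff _ _).mp (hφ x (hC.1 hx)).1
        have hpx := hp' x hx
        rw [hfe] at hpx ⊢
        exact ⟨subset_convexHull ℝ _ hv, hvf f (fun u hu => hf u (subset_convexHull ℝ _ hu)) hpx.2⟩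
    obtain ⟨A, hA, hAT⟩ := exists_face hV hs ((fun x => (V : Set _) ∩ φ x) '' (C : Set ι))
      (by
        rintro _ ⟨x, hx, rfl⟩
        exact (Ft_inter (hφ x (hC.1 hx))).1) v hv
      (by
        rintro _ ⟨x, hx, rfl⟩
        exact ⟨hv, hvC x hx⟩)
    refine ⟨A, hA, ?_⟩
    ext x
    rw [Finset.mem_filter]
    constructor
    · rintro ⟨hx, hAx⟩
      have h1 : (V : Set _) ∩ φ x ∈ CF (V : Set _) A :=
        ⟨(Ft_inter (hφ x hx)).1, Set.subset_inter hA.subset hAx⟩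
      rw [hAT] at h1
      obtain ⟨y, hy, hyx⟩ := h1
      have : x = y := by
        apply hinj x hx y (hC.1 hy)
        rw [← (Ft_inter (hφ x hx)).2, ← (Ft_inter (hφ y (hC.1 hy))).2]

        exact congrArg _ hyx.symm
      rw [this]
      exact hy
    · intro hx
      have h1 : (V : Set _) ∩ φ x ∈ CF (V : Set _) A := by
        rw [hAT]
        exact ⟨x, hx, rfl⟩
      exact ⟨hC.1 hx, h1.2.trans Set.inter_subset_right⟩
  have hinjA : ∀ A B, FS (V : Set _) A → FS (V : Set _) B →
      s.filter (fun x => A ⊆ φ x) = s.filter (fun x => B ⊆ φ x) → B ⊆ A := by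
    intro A B hA hB he
    apply CF_inj hV hA hB
    rintro H ⟨hH, hAH⟩
    refine ⟨hH, ?_⟩
    obtain ⟨x, hx, hxH⟩ := hsurj _ (Ft_hull hH)
    have h1 : x ∈ s.filter (fun x => A ⊆ φ x) := by
      rw [Finset.mem_filter, hxH]
      exact ⟨hx, hAH.trans (subset_convexHull ℝ _)⟩
    rw [he, Finset.mem_filter, hxH] at h1
    rw [← hull_inter hH.1]
    exact Set.subset_inter hB.subset h1.2
  constructor
  · intro C hC
    obtain ⟨A, hA, rfl⟩ := hsur C hC
    have := hcard A hA
    omega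
  · intro i hi
    rw [← Set.ncard_coe_finset]
    refine Set.ncard_congr (fun F _ => s.filter (fun x => (V : Set _) ∩ F ⊆ φ x)) ?_ ?_ ?_
    · rintro F ⟨hF, hFi⟩
      obtain ⟨h1, h2⟩ := FS_inter ((face_iff _ _).mp hF)
      rw [← h2, polyDim_hull] at hFi
      rw [Finset.mem_coe, Finset.mem_filter]
      refine ⟨hclq _ h1, ?_⟩
      have := hcard _ h1
      omega
    · rintro F G ⟨hF, _⟩ ⟨hG, _⟩ he
      obtain ⟨h1, h2⟩ := FS_inter ((face_iff _ _).mp hF)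
      obtain ⟨h3, h4⟩ := FS_inter ((face_iff _ _).mp hG)
      rw [← h2, ← h4]
      rw [Set.Subset.antisymm (hinjA _ _ h3 h1 he.symm) (hinjA _ _ h1 h3 he)]
    · intro C hC
      rw [Finset.mem_coe, Finset.mem_filter] at hC
      obtain ⟨A, hA, hAC⟩ := hsur C hC.1
      refine ⟨convexHull ℝ A, ⟨(face_iff _ _).mpr (FS_hull hA), ?_⟩, ?_⟩
      · rw [polyDim_hull]
        have := hcard A hA
        rw [hAC, hC.2] at this
        omega
      · skip
        rw [hull_inter hA, hAC]

end trans



lemma cast_inj_lt {N a b : ℕ} (ha : a < N) (hb : b < N) : ((a : ZMod N) = b) ↔ a = b := by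
  rw [ZMod.natCast_eq_natCast_iff', Nat.mod_eq_of_lt ha, Nat.mod_eq_of_lt hb]

lemma val_sub_cast {N a c : ℕ} (ha : a < N) (hc : c < N) :
    ((c : ZMod N) - (a : ZMod N)).val = if a ≤ c then c - a else c + N - a := by
  split_ifs with h
  · rw [← Nat.cast_sub h, ZMod.val_natCast, Nat.mod_eq_of_lt (by omega)]
  · have : (c : ZMod N) - (a : ZMod N) = ((c + N - a : ℕ) : ZMod N) := by
      rw [Nat.cast_sub (by omega)]
      simp
    rw [this, ZMod.val_natCast, Nat.mod_eq_of_lt (by omega)]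

lemma btw_cast {N a c b : ℕ} (ha : a < N) (hb : b < N) (hc : c < N) :
    StrictBtw N a c b ↔ (a < c ∧ c < b) ∨ (b < a ∧ (a < c ∨ c < b)) := by
  unfold StrictBtw
  rw [val_sub_cast ha hc, val_sub_cast ha hb]
  split_ifs <;> omega

lemma crosses_cast {N a b c d : ℕ} (hab : a < b) (hb : b < N) (hcd : c < d) (hd : d < N) :
    Crosses N {(a : ZMod N), (b : ZMod N)} {(c : ZMod N), (d : ZMod N)} ↔ cr a b c d := by
  constructor
  · rintro ⟨x, y, z, w, h1, h2, h3, h4⟩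
    rw [← Finset.coe_inj, Finset.coe_pair, Finset.coe_pair, Set.pair_eq_pair_iff] at h1 h2
    unfold cr
    rcases h1 with ⟨rfl, rfl⟩ | ⟨rfl, rfl⟩ <;> rcases h2 with ⟨rfl, rfl⟩ | ⟨rfl, rfl⟩ <;>
    rw [btw_cast (by omega) (by omega) (by omega)] at h3 h4 <;> omega
  · rintro (h | h)
    · refine ⟨a, b, c, d, rfl, rfl, ?_, ?_⟩ <;>
      rw [btw_cast (by omega) (by omega) (by omega)] <;> omega
    · refine ⟨a, b, d, c, rfl, Finset.pair_comm _ _, ?_, ?_⟩ <;>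
      rw [btw_cast (by omega) (by omega) (by omega)] <;> omega

lemma isDiag_cast {N a b : ℕ} (hab : a < b) (hb : b < N) :
    IsDiag N {(a : ZMod N), (b : ZMod N)} ↔ a + 2 ≤ b ∧ b + 2 ≤ a + N := by
  have key : ∀ x y : ℕ, x < N → y < N → (((y : ZMod N) = x + 1) ↔ (y = x + 1 ∨ (y = 0 ∧ x + 1 = N))) := by
    intro x y hx hy
    by_cases h : x + 1 = N
    · have : (x : ZMod N) + 1 = ((0 : ℕ) : ZMod N) := by
        rw [← Nat.cast_one, ← Nat.cast_add, h]; simp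
      rw [this, cast_inj_lt hy (by omega)]
      omega
    · have : (x : ZMod N) + 1 = ((x + 1 : ℕ) : ZMod N) := by simp
      rw [this, cast_inj_lt hy (by omega)]
      omega
  have hba : (b : ZMod N) ≠ a := by
    rw [Ne, cast_inj_lt hb (by omega)]; omega
  constructor
  · rintro ⟨x, y, h1, _, h2, h3⟩
    rw [← Finset.coe_inj, Finset.coe_pair, Finset.coe_pair, Set.pair_eq_pair_iff] at h1
    rw [Ne, eq_sub_iff_add_eq, eq_comm] at h3
    rcases h1 with ⟨rfl, rfl⟩ | ⟨rfl, rfl⟩ <;>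
    rw [Ne, key _ _ (by omega) (by omega)] at h2 <;> rw [key _ _ (by omega) (by omega)] at h3 <;>
    omega
  · intro h
    refine ⟨a, b, rfl, hba, ?_, ?_⟩
    · rw [Ne, key _ _ (by omega) (by omega)]; omega
    · rw [Ne, eq_sub_iff_add_eq, eq_comm, key _ _ (by omega) (by omega)]; omega

lemma cast_add_half {n a : ℕ} : ((a + n : ℕ) : ZMod (2 * n)) + (n : ZMod (2 * n)) = a := by
  have : ((2 * n : ℕ) : ZMod (2 * n)) = 0 := ZMod.natCast_self _
  push_cast at this ⊢
  linear_combination this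

lemma sym_cast {n a b : ℕ} : centralSym n {(a : ZMod (2 * n)), (b : ZMod (2 * n))} =
    {((a + n : ℕ) : ZMod (2 * n)), ((b + n : ℕ) : ZMod (2 * n))} := by
  unfold centralSym
  rw [Finset.image_insert, Finset.image_singleton]
  push_cast
  rfl

lemma sym_cast' {n a b : ℕ} : centralSym n {(a : ZMod (2 * n)), ((b + n : ℕ) : ZMod (2 * n))} =
    {(b : ZMod (2 * n)), ((a + n : ℕ) : ZMod (2 * n))} := by
  unfold centralSym
  rw [Finset.image_insert, Finset.image_singleton, cast_add_half, Finset.pair_comm]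
  push_cast
  rfl

lemma isDiameter_cast {n a b : ℕ} (hab : a < b) (hb : b < 2 * n) :
    IsDiameter n {(a : ZMod (2 * n)), (b : ZMod (2 * n))} ↔ b = a + n := by
  constructor
  · rintro ⟨x, h⟩
    rw [← Finset.coe_inj, Finset.coe_pair, Finset.coe_pair, Set.pair_eq_pair_iff] at h
    have h' : ((b : ZMod (2 * n)) = a + n) := by
      rcases h with ⟨rfl, h⟩ | ⟨h, rfl⟩
      · exact h
      · have : ((2 * n : ℕ) : ZMod (2 * n)) = 0 := ZMod.natCast_self _
        push_cast at this
        rw [h]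
        linear_combination - this
    by_cases h1 : a < n
    · rw [← Nat.cast_add, cast_inj_lt hb (by omega)] at h'
      exact h'
    · obtain ⟨c, rfl⟩ : ∃ c, a = c + n := ⟨a - n, by omega⟩
      rw [cast_add_half, cast_inj_lt hb (by omega)] at h'
      omega
  · rintro rfl
    exact ⟨a, by push_cast; rfl⟩

/-- the edge `{a, b}` -/
def edg (n a b : ℕ) : Finset (ZMod (2 * n)) := {(a : ZMod (2 * n)), (b : ZMod (2 * n))}

/-- the element of the model encoded by a triple -/
def elm (n : ℕ) (x : ℕ × ℕ × ℕ) : DElem n :=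
  if x.1 = 0 then .pair {edg n x.2.1 x.2.2, centralSym n (edg n x.2.1 x.2.2)}
  else if x.1 = 1 then .red (edg n x.2.1 x.2.2) else .blue (edg n x.2.1 x.2.2)

lemma edg_inj {n a b c d : ℕ} (hab : a < b) (hb : b < 2 * n) (hcd : c < d) (hd : d < 2 * n)
    (h : edg n a b = edg n c d) : a = c ∧ b = d := by
  unfold edg at h
  rw [← Finset.coe_inj, Finset.coe_pair, Finset.coe_pair, Set.pair_eq_pair_iff] at h
  rw [cast_inj_lt (by omega) (by omega), cast_inj_lt (by omega) (by omega),
    cast_inj_lt (by omega) (by omega), cast_inj_lt (by omega) (by omega)] at h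
  omega

/-- normal form of the centrally symmetric edge -/
lemma sym_edg {n a b : ℕ} (hab : a < b) (ha : a < n) (hb : b < 2 * n) :
    ∃ a' b', centralSym n (edg n a b) = edg n a' b' ∧ a' < b' ∧ b' < 2 * n ∧
      ((b < n ∧ a' = a + n ∧ b' = b + n) ∨ (n ≤ b ∧ a' + n = b ∧ b' = a + n)) := by
  by_cases h : b < n
  · exact ⟨a + n, b + n, sym_cast, by omega, by omega, Or.inl ⟨h, rfl, rfl⟩⟩
  · obtain ⟨c, rfl⟩ : ∃ c, b = c + n := ⟨b - n, by omega⟩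
    exact ⟨c, a + n, sym_cast', by omega, by omega, Or.inr ⟨by omega, rfl, rfl⟩⟩

lemma sym_sym (n : ℕ) (e : Finset (ZMod (2 * n))) : centralSym n (centralSym n e) = e := by
  unfold centralSym
  rw [Finset.image_image]
  have : ((fun x : ZMod (2 * n) => x + (n : ZMod (2 * n))) ∘
      fun x : ZMod (2 * n) => x + (n : ZMod (2 * n))) = id := by
    funext x
    have : ((2 * n : ℕ) : ZMod (2 * n)) = 0 := ZMod.natCast_self _
    push_cast at this
    simp only [Function.comp, id]
    linear_combination this
  rw [this, Finset.image_id]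

lemma elm_mem {n : ℕ} (hn : 2 ≤ n) (x : ℕ × ℕ × ℕ) (hx : x ∈ sD n) : memM n (elm n x) := by
  obtain ⟨t, a, b⟩ := x
  rw [mem_sD] at hx
  obtain ⟨ht, ha, h⟩ := hx
  have hd : IsDiag (2 * n) (edg n a b) := (isDiag_cast (by omega) (by omega)).mpr (by omega)
  have hdm : IsDiameter n (edg n a b) ↔ b = a + n := isDiameter_cast (by omega) (by omega)
  unfold elm
  simp only
  split_ifs with h0 h1
  · exact ⟨_, hd, by rw [hdm]; omega, rfl⟩
  · exact ⟨hd, by rw [hdm]; omega⟩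
  · exact ⟨hd, by rw [hdm]; omega⟩

lemma elm_inj {n : ℕ} (x y : ℕ × ℕ × ℕ) (hx : x ∈ sD n) (hy : y ∈ sD n)
    (h : elm n x = elm n y) : x = y := by
  obtain ⟨t, a, b⟩ := x
  obtain ⟨u, c, d⟩ := y
  rw [mem_sD] at hx hy
  obtain ⟨ht, ha, hx⟩ := hx
  obtain ⟨hu, hc, hy⟩ := hy
  suffices hs : t = u ∧ a = c ∧ b = d by
    obtain ⟨rfl, rfl, rfl⟩ := hs; rfl
  unfold elm at h
  simp only at h
  split_ifs at h with h1 h2 h3 h4 h5 h6 <;> try (simp only [reduceCtorEq] at h)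
  · rw [DElem.pair.injEq] at h
    have h7 : edg n a b ∈ ({edg n c d, centralSym n (edg n c d)} : Finset _) := by
      rw [← h]; simp
    rw [Finset.mem_insert, Finset.mem_singleton] at h7
    rcases h7 with h7 | h7
    · have := edg_inj (by omega) (by omega) (by omega) (by omega) h7
      omega
    · obtain ⟨c', d', e1, e2, e3, e4⟩ := sym_edg (n := n) (a := c) (b := d) (by omega) hc (by omega)
      rw [e1] at h7
      have := edg_inj (by omega) (by omega) e2 e3 h7
      omega
  all_goals
    simp only [DElem.red.injEq, DElem.blue.injEq] at h
    have := edg_inj (by omega) (by omega) (by omega) (by omega) h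
    omega

lemma exists_edg {n : ℕ} (hn : 2 ≤ n) (e : Finset (ZMod (2 * n))) (he : IsDiag (2 * n) e) :
    ∃ a b, e = edg n a b ∧ a < b ∧ b < 2 * n := by
  obtain ⟨x, y, rfl, hne, _⟩ := he
  have : NeZero (2 * n) := ⟨by omega⟩
  have hx := ZMod.natCast_zmod_val x
  have hy := ZMod.natCast_zmod_val y
  have lx := ZMod.val_lt x
  have ly := ZMod.val_lt y
  rcases lt_trichotomy x.val y.val with h | h | h
  · exact ⟨x.val, y.val, by rw [edg, hx, hy], h, ly⟩
  · exact absurd (ZMod.val_injective _ h).symm hne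
  · exact ⟨y.val, x.val, by rw [edg, hx, hy, Finset.pair_comm], h, lx⟩

lemma elm_surj_diam {n : ℕ} (hn : 2 ≤ n) (e : Finset (ZMod (2 * n))) (he : IsDiag (2 * n) e)
    (hd : IsDiameter n e) : ∃ a, a < n ∧ e = edg n a (a + n) := by
  obtain ⟨a, b, rfl, hab, hb⟩ := exists_edg hn e he
  have := (isDiameter_cast hab hb).mp hd
  subst this
  exact ⟨a, by omega, rfl⟩

lemma elm_surj {n : ℕ} (hn : 2 ≤ n) (z : DElem n) (hz : memM n z) : ∃ x ∈ sD n, elm n x = z := by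
  cases z with
  | pair s =>
    obtain ⟨e, he, hd, rfl⟩ := hz
    obtain ⟨a, b, rfl, hab, hb⟩ := exists_edg hn e he
    have h1 := (isDiag_cast hab hb).mp he
    have h2 : ¬ b = a + n := fun h => hd ((isDiameter_cast hab hb).mpr h)
    by_cases ha : a < n ∧ b < a + n
    · refine ⟨(0, a, b), (mem_sD _ _ _ _).mpr (by omega), ?_⟩
      simp [elm]
    · obtain ⟨c, d, h3, h4, h5⟩ : ∃ c d, (0, c, d) ∈ sD n ∧ c < d ∧
          centralSym n (edg n c d) = edg n a b := by
        by_cases ha' : n ≤ a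
        · obtain ⟨c, rfl⟩ : ∃ c, a = c + n := ⟨a - n, by omega⟩
          obtain ⟨d, rfl⟩ : ∃ d, b = d + n := ⟨b - n, by omega⟩
          exact ⟨c, d, (mem_sD _ _ _ _).mpr (by omega), by omega, sym_cast⟩
        · obtain ⟨c, rfl⟩ : ∃ c, b = c + n := ⟨b - n, by omega⟩
          exact ⟨c, a + n, (mem_sD _ _ _ _).mpr (by omega), by omega, sym_cast'⟩
      refine ⟨(0, c, d), h3, ?_⟩
      simp only [elm, if_true]
      rw [← h5, sym_sym, Finset.pair_comm]
  | red e =>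
    obtain ⟨a, ha, rfl⟩ := elm_surj_diam hn e hz.1 hz.2
    refine ⟨(1, a, a + n), (mem_sD _ _ _ _).mpr (by omega), ?_⟩
    simp [elm]
  | blue e =>
    obtain ⟨a, ha, rfl⟩ := elm_surj_diam hn e hz.1 hz.2
    refine ⟨(2, a, a + n), (mem_sD _ _ _ _).mpr (by omega), ?_⟩
    simp [elm]

lemma compat_pp {n a b c d : ℕ} (ha : a < n) (hab : a + 2 ≤ b) (hb : b + 1 ≤ a + n)
    (hc : c < n) (hcd : c + 2 ≤ d) (hd : d + 1 ≤ c + n) :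
    (∀ e ∈ ({edg n a b, centralSym n (edg n a b)} : Finset _),
      ∀ f ∈ ({edg n c d, centralSym n (edg n c d)} : Finset _), ¬ Crosses (2 * n) e f) ↔
    (¬ cr a b c d ∧ ¬ cr (a + n) (b + n) c d ∧ ¬ cr a b (c + n) (d + n)) := by
  obtain ⟨a', b', e1, e2, e3, e4⟩ := sym_edg (n := n) (a := a) (b := b) (by omega) ha (by omega)
  obtain ⟨c', d', f1, f2, f3, f4⟩ := sym_edg (n := n) (a := c) (b := d) (by omega) hc (by omega)
  simp only [Finset.mem_insert, Finset.mem_singleton, forall_eq_or_imp, forall_eq]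
  rw [e1, f1]
  unfold edg
  rw [crosses_cast (by omega) (by omega) (by omega) (by omega),
    crosses_cast (by omega) (by omega) (by omega) (by omega),
    crosses_cast (by omega) (by omega) (by omega) (by omega),
    crosses_cast (by omega) (by omega) (by omega) (by omega)]
  unfold cr
  rcases e4 with ⟨_, rfl, rfl⟩ | ⟨_, rfl, rfl⟩ <;> rcases f4 with ⟨_, rfl, rfl⟩ | ⟨_, rfl, rfl⟩ <;>
  omega

lemma compat_dp {n a c d : ℕ} (ha : a < n)
    (hc : c < n) (hcd : c + 2 ≤ d) (hd : d + 1 ≤ c + n) :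
    (∀ f ∈ ({edg n c d, centralSym n (edg n c d)} : Finset _),
      ¬ Crosses (2 * n) (edg n a (a + n)) f) ↔
    (¬ cr a (a + n) c d ∧ ¬ cr (a + n) (a + n + n) c d ∧ ¬ cr a (a + n) (c + n) (d + n)) := by
  obtain ⟨c', d', f1, f2, f3, f4⟩ := sym_edg (n := n) (a := c) (b := d) (by omega) hc (by omega)
  simp only [Finset.mem_insert, Finset.mem_singleton, forall_eq_or_imp, forall_eq]
  rw [f1]
  unfold edg
  rw [crosses_cast (by omega) (by omega) (by omega) (by omega),
    crosses_cast (by omega) (by omega) (by omega) (by omega)]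
  unfold cr
  rcases f4 with ⟨_, rfl, rfl⟩ | ⟨_, rfl, rfl⟩ <;>
  omega

lemma elm_compat {n : ℕ} (x y : ℕ × ℕ × ℕ) (hx : x ∈ sD n) (hy : y ∈ sD n) :
    DCompat n (elm n x) (elm n y) ↔ RD n x y := by
  obtain ⟨t, a, b⟩ := x
  obtain ⟨u, c, d⟩ := y
  rw [mem_sD] at hx hy
  obtain ⟨ht, ha, hx⟩ := hx
  obtain ⟨hu, hc, hy⟩ := hy
  have hE : ∀ p q : ℕ, p < n → q < n → (edg n p (p + n) = edg n q (q + n) ↔ p = q) := by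
    intro p q hp hq
    constructor
    · intro h
      exact (edg_inj (by omega) (by omega) (by omega) (by omega) h).1
    · rintro rfl; rfl
  rcases hx with ⟨rfl, hx⟩ | ⟨ht0, rfl⟩ <;> rcases hy with ⟨rfl, hy⟩ | ⟨hu0, rfl⟩
  · have := compat_pp ha hx.1 hx.2 hc hy.1 hy.2
    simp only [elm, if_true, DCompat, RD]
    rw [this]
    tauto
  · have := compat_dp hc ha hx.1 hx.2
    have hu' : u = 1 ∨ u = 2 := by omega
    rcases hu' with rfl | rfl <;> simp [elm, DCompat, RD] <;>
      simp only [Finset.mem_insert, Finset.mem_singleton, forall_eq_or_imp, forall_eq] at this <;>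
      rw [this] <;> unfold cr <;> omega
  · have := compat_dp ha hc hy.1 hy.2
    have ht' : t = 1 ∨ t = 2 := by omega
    rcases ht' with rfl | rfl <;> simp [elm, DCompat, RD] <;>
      simp only [Finset.mem_insert, Finset.mem_singleton, forall_eq_or_imp, forall_eq] at this <;>
      rw [this]
  · have := hE a c ha hc
    have ht' : t = 1 ∨ t = 2 := by omega
    have hu' : u = 1 ∨ u = 2 := by omega
    rcases ht' with rfl | rfl <;> rcases hu' with rfl | rfl <;> simp [elm, DCompat, RD, this]

lemma realizes_count (n d : ℕ) (hn : 2 ≤ n) (P : Set (Fin d → ℝ)) (hP : RealizesD n P) :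
    (∀ C ∈ cliq (RD n) (sD n), C.card ≤ n) ∧
    ∀ i ≤ n, {F | IsFaceOf F P ∧ polyDim F = i}.ncard =
      ((cliq (RD n) (sD n)).filter (fun C => C.card = n - i)).card := by
  classical
  obtain ⟨φ, h1, h2, h3, h4, h5, h6, h7⟩ := hP
  obtain ⟨ψ, hφ⟩ : ∃ ψ : ℕ × ℕ × ℕ → Set (Fin d → ℝ), ∀ x (hx : x ∈ sD n),
      ψ x = φ (⟨elm n x, elm_mem hn x hx⟩ : MSet n) :=
    ⟨fun x => if h : memM n (elm n x) then φ ⟨elm n x, h⟩ else ∅,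
      fun x hx => dif_pos (elm_mem hn x hx)⟩
  refine faces_count n P (sD n) (RD n) ψ h1 h2 h3 (by omega) ?_ ?_ ?_ ?_
  · intro x hx
    rw [hφ x hx]
    exact h4 _
  · intro x hx y hy he
    rw [hφ x hx, hφ y hy] at he
    exact elm_inj x y hx hy (congrArg Subtype.val (h5 he))
  · intro F hF
    obtain ⟨z, hz⟩ := h6 F hF
    obtain ⟨x, hx, hxz⟩ := elm_surj hn z.1 z.2
    refine ⟨x, hx, ?_⟩
    rw [hφ x hx, ← hz]
    exact congrArg φ (Subtype.ext hxz)
  · intro x hx y hy hxy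
    rw [hφ x hx, hφ y hy]
    refine (h7 _ _ ?_).trans (elm_compat x y hx hy)
    intro h
    exact hxy (elm_inj x y hx hy (congrArg Subtype.val h))

theorem gal_aux (n d : ℕ) (hn : 2 ≤ n) (P : Set (Fin d → ℝ))
    (hP : RealizesD n P) :
    ∃ γ : ℕ → ℕ,
      ∑ i ∈ Finset.range (n + 1),
          (({F : Set (Fin d → ℝ) | IsFaceOf F P ∧ polyDim F = i}.ncard : Polynomial ℤ)
            * (Polynomial.X - 1) ^ i)
        = ∑ j ∈ Finset.range (n / 2 + 1),
            (γ j : Polynomial ℤ) * Polynomial.X ^ j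
              * (1 + Polynomial.X) ^ (n - 2 * j) := by
  obtain ⟨k, rfl⟩ : ∃ k, n = k + 2 := ⟨n - 2, by omega⟩
  obtain ⟨h1, h2⟩ := realizes_count (k + 2) d hn P hP
  refine ⟨gamD k, ?_⟩
  rw [← reflect_gamma k h1]
  refine Finset.sum_congr rfl fun i hi => ?_
  rw [Finset.mem_range] at hi
  rw [h2 i (by omega)]



/-- Gal's conjecture holds for generalized associahedra of type `D_n`. -/
theorem gal_conjecture_typeD (n d : ℕ) (hn : 2 ≤ n) (P : Set (Fin d → ℝ))
    (hP : RealizesD n P) :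
    ∃ γ : ℕ → ℕ,
      ∑ i ∈ Finset.range (n + 1),
          (({F : Set (Fin d → ℝ) | IsFaceOf F P ∧ polyDim F = i}.ncard : Polynomial ℤ)
            * (Polynomial.X - 1) ^ i)
        = ∑ j ∈ Finset.range (n / 2 + 1),
            (γ j : Polynomial ℤ) * Polynomial.X ^ j
              * (1 + Polynomial.X) ^ (n - 2 * j) := by
  exact gal_aux n d hn P hP

end GalD
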